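/- Let λ > 0, u ∈ L¹(Γ−,μ−) and g ∈ L¹(Ω,μ). Define f(x) = ∫_0^{τ−(x)} e^{−λt} g(Φ(x,−t)) dt + 1_{{τ−(x)<∞}}(x) · e^{−λ τ−(x)} u(Φ(x,−τ−(x))) for x ∈ Ω. Then f is the unique element of D(T_max) satisfying λ f − T_max f = g and B⁻f = u μ−-a.e.; moreover B⁺f ∈ L¹(Γ+,μ+) and ‖B⁺f‖_{L¹(Γ+,μ+)} + λ ‖f‖_{L¹(Ω,μ)} ≤ ‖u‖_{L¹(Γ−,μ−)} + ‖g‖_{L¹(Ω,μ)}, with equality if u ≥ 0 and g ≥ 0. -/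

import Mathlib

/-!
The proof works along characteristics, and the quantitative part is a mass balance.

*The boundary measures.* The defining identities of `μ∓` are equalities of Bochner integrals, so
they carry no information where the integrand on the boundary is not integrable. If `μ(Ω₋) > 0`,
testing with a strictly positive integrable weight forces integrability, and truncation upgrades the
identity to one for all nonnegative functions (`beals_nondeg`). If `μ(Ω₋) = 0`, every integrable
function on `Γ₋` vanishes almost everywhere (`ae_zero_of_degenerate`), and the zero measure does the
same service. Either way `exists_disint` gives a measure disintegrating `μ` on `Ω₋`; reversing time
treats `Γ₊`.

*Existence.* For almost every characteristic the source is locally integrable with exponential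
weight (`ae_good`), and there the explicit formula satisfies the integrated transport equation and
has the expected one-sided limits (`bvpSol_ode`, `bvpSol_traceM`, `bvpSol_traceP`). The weak
equation `bvpSol_weak` is obtained by duality: Fubini and invariance of `μ` move the solution
operator onto the test function, where it becomes a forward discounted integral, computed by the
fundamental theorem of calculus (`fwdInt_deriv`).

*Norm estimate.* A unit of mass with remaining lifetime `τ` deposits `λ ∫_0^τ e^{-λs} ds` inside `Ω`
and `e^{-λτ}` on `Γ₊`, in total `1`. Integrating this identity over the data gives `balance`, an
equality for nonnegative data; the inequality for signed data follows by taking absolute values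
(`bvpSol_norm`).

*Uniqueness.* The difference of two solutions is multiplied by `e^{λt}` when moving backwards by `t`
(`homog_growth`). On characteristics issued from `Γ₋` the zero trace makes it vanish; on those that
stay in `Ω` for the whole past, growth is incompatible with integrability and invariance of `μ`
(`homog_zero`).

The data are only almost everywhere measurable, so they are first replaced by everywhere measurable
representatives, which changes the solution on a null set only (`exists_rep`, `bvpSol_congr`).
-/

open MeasureTheory Set Filter Topology
open scoped ENNReal NNReal

noncomputable section

/-- Forward exit time of the flow `Φ` from `Ω` (`∞` if the forward curve never leaves `Ω`). -/
def tauP {N : ℕ} (Ω : Set (Fin N → ℝ)) (Φ : (Fin N → ℝ) → ℝ → (Fin N → ℝ))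
    (x : Fin N → ℝ) : ℝ≥0∞ :=
  sInf {s : ℝ≥0∞ | ∃ r : ℝ, 0 < r ∧ s = ENNReal.ofReal r ∧ Φ x r ∉ Ω}

/-- Backward exit time of the flow `Φ` from `Ω`. -/
def tauM {N : ℕ} (Ω : Set (Fin N → ℝ)) (Φ : (Fin N → ℝ) → ℝ → (Fin N → ℝ))
    (x : Fin N → ℝ) : ℝ≥0∞ :=
  sInf {s : ℝ≥0∞ | ∃ r : ℝ, 0 < r ∧ s = ENNReal.ofReal r ∧ Φ x (-r) ∉ Ω}

/-- `∫_0^τ g(s) ds`, over `(0,∞)` when `τ = ∞`. -/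
def curveInt (g : ℝ → ℝ) (τ : ℝ≥0∞) : ℝ :=
  ∫ s in {s : ℝ | 0 < s ∧ ENNReal.ofReal s < τ}, g s

/-- The incoming part `Γ₋` of the boundary `∂Ω`. -/
def GammaM {N : ℕ} (Ω : Set (Fin N → ℝ)) (Φ : (Fin N → ℝ) → ℝ → (Fin N → ℝ)) :
    Set (Fin N → ℝ) :=
  {y ∈ frontier Ω | ∃ x ∈ Ω, tauM Ω Φ x < ⊤ ∧ y = Φ x (-(tauM Ω Φ x).toReal)}

/-- The outgoing part `Γ₊` of the boundary `∂Ω`. -/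
def GammaP {N : ℕ} (Ω : Set (Fin N → ℝ)) (Φ : (Fin N → ℝ) → ℝ → (Fin N → ℝ)) :
    Set (Fin N → ℝ) :=
  {y ∈ frontier Ω | ∃ x ∈ Ω, tauP Ω Φ x < ⊤ ∧ y = Φ x ((tauP Ω Φ x).toReal)}

/-- The boundary measures `μ∓` satisfy the integration-along-characteristics identities. -/
def IsBoundaryMeasures {N : ℕ} (Ω : Set (Fin N → ℝ)) (Φ : (Fin N → ℝ) → ℝ → (Fin N → ℝ))
    (μ μm μp : Measure (Fin N → ℝ)) : Prop :=
  ∀ f : (Fin N → ℝ) → ℝ, Integrable f (μ.restrict Ω) →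
    (∫ x in {x ∈ Ω | tauM Ω Φ x < ⊤}, f x ∂μ
        = ∫ y in GammaM Ω Φ, curveInt (fun s => f (Φ y s)) (tauP Ω Φ y) ∂μm) ∧
    (∫ x in {x ∈ Ω | tauP Ω Φ x < ⊤}, f x ∂μ
        = ∫ y in GammaP Ω Φ, curveInt (fun s => f (Φ y (-s))) (tauM Ω Φ y) ∂μp)

/-- The identities of Lemma `defmu+-` (beals1 and beals2). -/
def BealsProperty {N : ℕ} (Ω : Set (Fin N → ℝ)) (Φ : (Fin N → ℝ) → ℝ → (Fin N → ℝ))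
    (μ μm μp : Measure (Fin N → ℝ)) : Prop :=
  ∀ T : ℝ, 0 < T → ∀ f : ((Fin N → ℝ) × ℝ) → ℝ,
    Integrable f ((μ.restrict Ω).prod (volume.restrict (Ioo (0 : ℝ) T))) →
    (∫ p, f p ∂((μ.restrict Ω).prod (volume.restrict (Ioo (0 : ℝ) T)))
        = (∫ t in Ioo (0 : ℝ) T, (∫ y in GammaP Ω Φ,
            (∫ s in Ioo (0 : ℝ) ((tauM Ω Φ y ⊓ ENNReal.ofReal t).toReal),
              f (Φ y (-s), t - s)) ∂μp))
          + ∫ x in Ω, (∫ s in Ioo (0 : ℝ) ((tauM Ω Φ x ⊓ ENNReal.ofReal T).toReal),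
              f (Φ x (-s), T - s)) ∂μ)
    ∧ (∫ p, f p ∂((μ.restrict Ω).prod (volume.restrict (Ioo (0 : ℝ) T)))
        = (∫ t in Ioo (0 : ℝ) T, (∫ y in GammaM Ω Φ,
            (∫ s in Ioo (0 : ℝ) ((tauP Ω Φ y ⊓ ENNReal.ofReal (T - t)).toReal),
              f (Φ y s, t + s)) ∂μm))
          + ∫ x in Ω, (∫ s in Ioo (0 : ℝ) ((tauP Ω Φ x ⊓ ENNReal.ofReal T).toReal),
              f (Φ x s, s)) ∂μ)

/-- The class `𝔜` of test functions, together with the derivative `Dψ` along the flow. -/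
structure IsTestFun {N : ℕ} (Ω : Set (Fin N → ℝ)) (Φ : (Fin N → ℝ) → ℝ → (Fin N → ℝ))
    (ψ Dψ : (Fin N → ℝ) → ℝ) : Prop where
  measurable : Measurable ψ
  bounded : ∃ C, ∀ x, |ψ x| ≤ C
  compact_support : ∃ K : Set (Fin N → ℝ), IsCompact K ∧ K ⊆ Ω ∧ ∀ x ∉ K, ψ x = 0
  smooth : ∀ x ∈ Ω, ContDiffOn ℝ 1 (fun s => ψ (Φ x s))
      {s : ℝ | ENNReal.ofReal s < tauP Ω Φ x ∧ ENNReal.ofReal (-s) < tauM Ω Φ x}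
  hasDeriv : ∀ x ∈ Ω, HasDerivAt (fun s => ψ (Φ x s)) (Dψ x) 0
  measurableD : Measurable Dψ
  boundedD : ∃ C, ∀ x, |Dψ x| ≤ C

/-- `f ∈ D(T_max)` with `T_max f = g`. -/
def InDomTmax {N : ℕ} (Ω : Set (Fin N → ℝ)) (Φ : (Fin N → ℝ) → ℝ → (Fin N → ℝ))
    (μ : Measure (Fin N → ℝ)) (f g : (Fin N → ℝ) → ℝ) : Prop :=
  Integrable f (μ.restrict Ω) ∧ Integrable g (μ.restrict Ω) ∧
    ∀ ψ Dψ : (Fin N → ℝ) → ℝ, IsTestFun Ω Φ ψ Dψ →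
      ∫ x in Ω, g x * ψ x ∂μ = ∫ x in Ω, f x * Dψ x ∂μ

/-- A sequence of one-dimensional mollifiers supported in `[0, 1/n]`. -/
def IsMollifier (ρ : ℕ → ℝ → ℝ) : Prop :=
  ∀ n : ℕ, ContDiff ℝ (⊤ : ℕ∞) (ρ n) ∧ (∀ s, 0 ≤ ρ n s) ∧
    (∀ s, s ∉ Icc (0 : ℝ) (1 / (n + 1 : ℝ)) → ρ n s = 0) ∧ (∫ s, ρ n s) = 1

/-- Mollification along the characteristic curves. -/
def moll {N : ℕ} (Ω : Set (Fin N → ℝ)) (Φ : (Fin N → ℝ) → ℝ → (Fin N → ℝ))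
    (ρ : ℝ → ℝ) (f : (Fin N → ℝ) → ℝ) (x : Fin N → ℝ) : ℝ :=
  curveInt (fun s => ρ s * f (Φ x (-s))) (tauM Ω Φ x)

/-- The lifted flow `Ψ(ξ,s) = (Φ(ξ₁,s), ξ₂+s)` on `Ω × (0,T)`. -/
def lflow {N : ℕ} (Φ : (Fin N → ℝ) → ℝ → (Fin N → ℝ)) (ξ : (Fin N → ℝ) × ℝ) (s : ℝ) :
    (Fin N → ℝ) × ℝ := (Φ ξ.1 s, ξ.2 + s)

/-- Forward exit time `ℓ₊` of the lifted flow. -/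
def ellP {N : ℕ} (Ω : Set (Fin N → ℝ)) (Φ : (Fin N → ℝ) → ℝ → (Fin N → ℝ)) (T : ℝ)
    (ξ : (Fin N → ℝ) × ℝ) : ℝ≥0∞ := tauP Ω Φ ξ.1 ⊓ ENNReal.ofReal (T - ξ.2)

/-- Backward exit time `ℓ₋` of the lifted flow. -/
def ellM {N : ℕ} (Ω : Set (Fin N → ℝ)) (Φ : (Fin N → ℝ) → ℝ → (Fin N → ℝ))
    (ξ : (Fin N → ℝ) × ℝ) : ℝ≥0∞ := tauM Ω Φ ξ.1 ⊓ ENNReal.ofReal ξ.2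

/-- The incoming part `Σ₋,T` of the boundary of `Ω × (0,T)`. -/
def SigmaM {N : ℕ} (Ω : Set (Fin N → ℝ)) (Φ : (Fin N → ℝ) → ℝ → (Fin N → ℝ)) (T : ℝ) :
    Set ((Fin N → ℝ) × ℝ) :=
  {ζ ∈ frontier (Ω ×ˢ Ioo (0 : ℝ) T) |
    ∃ ξ ∈ Ω ×ˢ Ioo (0 : ℝ) T, ζ = lflow Φ ξ (-(ellM Ω Φ ξ).toReal)}

/-- The outgoing part `Σ₊,T` of the boundary of `Ω × (0,T)`. -/
def SigmaP {N : ℕ} (Ω : Set (Fin N → ℝ)) (Φ : (Fin N → ℝ) → ℝ → (Fin N → ℝ)) (T : ℝ) :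
    Set ((Fin N → ℝ) × ℝ) :=
  {ζ ∈ frontier (Ω ×ˢ Ioo (0 : ℝ) T) |
    ∃ ξ ∈ Ω ×ˢ Ioo (0 : ℝ) T, ζ = lflow Φ ξ ((ellP Ω Φ T ξ).toReal)}

/-- The semigroup `U₀(t)` with no re-entry boundary conditions. -/
def U0 {N : ℕ} (Ω : Set (Fin N → ℝ)) (Φ : (Fin N → ℝ) → ℝ → (Fin N → ℝ)) (t : ℝ)
    (f : (Fin N → ℝ) → ℝ) (x : Fin N → ℝ) : ℝ :=
  if ENNReal.ofReal t < tauM Ω Φ x then f (Φ x (-t)) else 0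

/-- `x ↦ ∫_0^{τ₋(x)} e^{-λ t} g(Φ(x,-t)) dt`. -/
def resolv {N : ℕ} (Ω : Set (Fin N → ℝ)) (Φ : (Fin N → ℝ) → ℝ → (Fin N → ℝ)) (lam : ℝ)
    (g : (Fin N → ℝ) → ℝ) (x : Fin N → ℝ) : ℝ :=
  curveInt (fun t => Real.exp (-(lam * t)) * g (Φ x (-t))) (tauM Ω Φ x)

/-- The candidate solution of the boundary value problem `(λ - T_max) f = g`, `B⁻ f = u`. -/
def bvpSol {N : ℕ} (Ω : Set (Fin N → ℝ)) (Φ : (Fin N → ℝ) → ℝ → (Fin N → ℝ)) (lam : ℝ)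
    (g u : (Fin N → ℝ) → ℝ) (x : Fin N → ℝ) : ℝ :=
  resolv Ω Φ lam g x +
    (if tauM Ω Φ x < ⊤ then
      Real.exp (-(lam * (tauM Ω Φ x).toReal)) * u (Φ x (-(tauM Ω Φ x).toReal)) else 0)

/-- `f` has incoming trace `u` on `Γ₋`, via an absolutely continuous representative
(along the characteristics, with derivative `-g`). -/
def IsTraceM {N : ℕ} (Ω : Set (Fin N → ℝ)) (Φ : (Fin N → ℝ) → ℝ → (Fin N → ℝ))
    (μ μm : Measure (Fin N → ℝ)) (f g u : (Fin N → ℝ) → ℝ) : Prop :=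
  ∃ fs : (Fin N → ℝ) → ℝ, fs =ᵐ[μ.restrict Ω] f ∧
    (∀ᵐ x ∂μ.restrict Ω, ∀ t₁ t₂ : ℝ, t₁ ≤ t₂ →
      ENNReal.ofReal (-t₁) < tauM Ω Φ x → ENNReal.ofReal t₂ < tauP Ω Φ x →
      fs (Φ x t₁) - fs (Φ x t₂) = ∫ s in t₁..t₂, g (Φ x s)) ∧
    ∀ᵐ y ∂μm.restrict (GammaM Ω Φ),
      Tendsto (fun t => fs (Φ y t)) (𝓝[>] (0 : ℝ)) (𝓝 (u y))

/-- `f` has outgoing trace `w` on `Γ₊`. -/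
def IsTraceP {N : ℕ} (Ω : Set (Fin N → ℝ)) (Φ : (Fin N → ℝ) → ℝ → (Fin N → ℝ))
    (μ μp : Measure (Fin N → ℝ)) (f g w : (Fin N → ℝ) → ℝ) : Prop :=
  ∃ fs : (Fin N → ℝ) → ℝ, fs =ᵐ[μ.restrict Ω] f ∧
    (∀ᵐ x ∂μ.restrict Ω, ∀ t₁ t₂ : ℝ, t₁ ≤ t₂ →
      ENNReal.ofReal (-t₁) < tauM Ω Φ x → ENNReal.ofReal t₂ < tauP Ω Φ x →
      fs (Φ x t₁) - fs (Φ x t₂) = ∫ s in t₁..t₂, g (Φ x s)) ∧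
    ∀ᵐ y ∂μp.restrict (GammaP Ω Φ),
      Tendsto (fun t => fs (Φ y (-t))) (𝓝[>] (0 : ℝ)) (𝓝 (w y))

/-! ### The flow, exit times and boundary points -/

section

/-- The properties of the characteristic flow used below: joint continuity (with the time as the
first coordinate) and the one-parameter group law. -/
structure IsFlow {N : ℕ} (Φ : (Fin N → ℝ) → ℝ → (Fin N → ℝ)) : Prop where
  cont : Continuous fun p : ℝ × (Fin N → ℝ) => Φ p.2 p.1
  zero : ∀ x, Φ x 0 = x
  add : ∀ x s t, Φ (Φ x s) t = Φ x (s + t)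

theorem IsFlow.rev {N : ℕ} {Φ : (Fin N → ℝ) → ℝ → (Fin N → ℝ)} (h : IsFlow Φ) :
    IsFlow (fun x s => Φ x (-s)) where
  cont := h.cont.comp (by fun_prop : Continuous fun p : ℝ × (Fin N → ℝ) => (-p.1, p.2))
  zero x := by simp [h.zero]
  add x s t := by simp [h.add]; congr 1; ring

theorem dist_flow_le_of_nonneg {N : ℕ} {κ : ℝ≥0} {F : (Fin N → ℝ) → (Fin N → ℝ)}
    (hF : LipschitzWith κ F) {Φ : (Fin N → ℝ) → ℝ → (Fin N → ℝ)}
    (hΦ0 : ∀ x, Φ x 0 = x) (hΦ' : ∀ x s, HasDerivAt (Φ x) (F (Φ x s)) s)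
    (x y : Fin N → ℝ) {t : ℝ} (ht : 0 ≤ t) :
    dist (Φ x t) (Φ y t) ≤ dist x y * Real.exp (κ * t) := by
  have hc : ∀ x, Continuous (Φ x) := fun x =>
    continuous_iff_continuousAt.2 fun s => (hΦ' x s).continuousAt
  have := dist_le_of_trajectories_ODE (v := fun _ => F) (K := κ) (f := Φ x) (g := Φ y) (a := 0)
    (b := t) (δ := dist x y) (fun _ => hF) (hc x).continuousOn
    (fun s _ => (hΦ' x s).hasDerivWithinAt) (hc y).continuousOn
    (fun s _ => (hΦ' y s).hasDerivWithinAt) (by simp [hΦ0]) t ⟨ht, le_rfl⟩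
  simpa using this

theorem dist_flow_le {N : ℕ} {κ : ℝ≥0} {F : (Fin N → ℝ) → (Fin N → ℝ)}
    (hF : LipschitzWith κ F) {Φ : (Fin N → ℝ) → ℝ → (Fin N → ℝ)}
    (hΦ0 : ∀ x, Φ x 0 = x) (hΦ' : ∀ x s, HasDerivAt (Φ x) (F (Φ x s)) s)
    (x y : Fin N → ℝ) (t : ℝ) :
    dist (Φ x t) (Φ y t) ≤ dist x y * Real.exp (κ * |t|) := by
  rcases le_total 0 t with ht | ht
  · simpa [abs_of_nonneg ht] using dist_flow_le_of_nonneg hF hΦ0 hΦ' x y ht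
  · have hF' : LipschitzWith κ (fun z => -F z) := hF.neg
    have := dist_flow_le_of_nonneg hF' (Φ := fun x s => Φ x (-s)) (by simpa using hΦ0)
      (fun x s => by
        have := (hΦ' x (-s)).scomp s (hasDerivAt_neg s)
        rw [neg_one_smul] at this
        exact this) x y (neg_nonneg.2 ht)
    simpa [abs_of_nonpos ht] using this

/-- The group law is uniqueness for the differential equation; joint continuity is the Grönwall bound
`dist_flow_le` combined with continuity in time. -/
theorem isFlow_of_lipschitz {N : ℕ} {κ : ℝ≥0} {F : (Fin N → ℝ) → (Fin N → ℝ)}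
    (hF : LipschitzWith κ F) {Φ : (Fin N → ℝ) → ℝ → (Fin N → ℝ)}
    (hΦ0 : ∀ x, Φ x 0 = x) (hΦ' : ∀ x s, HasDerivAt (Φ x) (F (Φ x s)) s) : IsFlow Φ where
  zero := hΦ0
  add x s t := by
    have := ODE_solution_unique_univ (v := fun _ => F) (s := fun _ => univ) (K := κ)
      (f := Φ (Φ x s)) (g := fun t => Φ x (s + t)) (t₀ := 0) (fun _ => hF.lipschitzOnWith)
      (fun t => ⟨hΦ' _ t, trivial⟩)
      (fun t => ⟨(hΦ' x (s + t)).comp_const_add s t, trivial⟩) (by simp [hΦ0])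
    exact congrFun this t
  cont := by
    rw [continuous_iff_continuousAt]
    rintro ⟨t₀, x₀⟩
    rw [ContinuousAt, tendsto_iff_dist_tendsto_zero]
    have hc : Continuous (Φ x₀) :=
      continuous_iff_continuousAt.2 fun s => (hΦ' x₀ s).continuousAt
    have hlim : Tendsto (fun p : ℝ × (Fin N → ℝ) =>
        dist p.2 x₀ * Real.exp (κ * |p.1|) + dist (Φ x₀ p.1) (Φ x₀ t₀)) (𝓝 (t₀, x₀)) (𝓝 0) := by
      have : Continuous (fun p : ℝ × (Fin N → ℝ) =>
        dist p.2 x₀ * Real.exp (κ * |p.1|) + dist (Φ x₀ p.1) (Φ x₀ t₀)) := by fun_prop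
      simpa using this.tendsto (t₀, x₀)
    refine squeeze_zero (fun _ => dist_nonneg) (fun p => ?_) hlim
    refine (dist_triangle _ (Φ x₀ p.1) _).trans ?_
    gcongr
    exact dist_flow_le hF hΦ0 hΦ' p.2 x₀ p.1

section tau
variable {N : ℕ} {Φ : (Fin N → ℝ) → ℝ → (Fin N → ℝ)} {Ω : Set (Fin N → ℝ)}

theorem IsFlow.cont_time (fl : IsFlow Φ) (x : Fin N → ℝ) : Continuous (Φ x) :=
  fl.cont.comp (by fun_prop : Continuous fun t : ℝ => (t, x))

theorem IsFlow.cont_space (fl : IsFlow Φ) (t : ℝ) : Continuous (fun x => Φ x t) :=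
  fl.cont.comp (by fun_prop : Continuous fun x : Fin N → ℝ => (t, x))

theorem tauM_rev : tauM Ω (fun x s => Φ x (-s)) = tauP Ω Φ := by
  funext x; simp [tauM, tauP]

theorem tauP_rev : tauP Ω (fun x s => Φ x (-s)) = tauM Ω Φ := rfl

theorem GammaM_rev : GammaM Ω (fun x s => Φ x (-s)) = GammaP Ω Φ := by
  simp [GammaM, GammaP, tauM_rev]

/-- The forward exit time exceeds `s > 0` exactly when the characteristic stays in `Ω` on the
half-open interval `(0,s]`; openness of `Ω` makes the inequality strict. -/
theorem lt_tauP_iff (fl : IsFlow Φ) (hΩ : IsOpen Ω) {x : Fin N → ℝ} {s : ℝ} (hs : 0 < s) :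
    ENNReal.ofReal s < tauP Ω Φ x ↔ ∀ r ∈ Ioc 0 s, Φ x r ∈ Ω := by
  constructor
  · intro h r hr
    by_contra hc
    have : tauP Ω Φ x ≤ ENNReal.ofReal r := sInf_le ⟨r, hr.1, rfl, hc⟩
    exact absurd (h.trans_le this) (not_lt.2 (ENNReal.ofReal_le_ofReal hr.2))
  · intro h
    have h1 : ∀ᶠ r in 𝓝 s, Φ x r ∈ Ω :=
      (fl.cont_time x).continuousAt.eventually (hΩ.mem_nhds (h s ⟨hs, le_rfl⟩))
    obtain ⟨ε, hε, hb⟩ := Metric.eventually_nhds_iff.1 h1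
    have h2 : ENNReal.ofReal (s + ε) ≤ tauP Ω Φ x := by
      refine le_sInf ?_
      rintro _ ⟨r, hr, rfl, hrn⟩
      refine ENNReal.ofReal_le_ofReal ?_
      by_contra! hlt
      rcases le_or_gt r s with h3 | h3
      · exact hrn (h r ⟨hr, h3⟩)
      · exact hrn (hb (by rw [Real.dist_eq, abs_of_pos (by linarith)]; linarith))
    refine lt_of_lt_of_le ?_ h2
    exact (ENNReal.ofReal_lt_ofReal_iff (by linarith)).2 (by linarith)

theorem lt_tauM_iff (fl : IsFlow Φ) (hΩ : IsOpen Ω) {x : Fin N → ℝ} {s : ℝ} (hs : 0 < s) :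
    ENNReal.ofReal s < tauM Ω Φ x ↔ ∀ r ∈ Ioc 0 s, Φ x (-r) ∈ Ω :=
  lt_tauP_iff (Φ := fun x s => Φ x (-s)) fl.rev hΩ hs

theorem ennreal_eq_of_lt_iff {a b : ℝ≥0∞}
    (h : ∀ s : ℝ, 0 < s → (ENNReal.ofReal s < a ↔ ENNReal.ofReal s < b)) : a = b := by
  have key : ∀ {a b : ℝ≥0∞}, (∀ s : ℝ, 0 < s → (ENNReal.ofReal s < a → ENNReal.ofReal s < b)) →
      a ≤ b := by
    intro a b h
    by_contra! hlt
    obtain ⟨c, hc1, hc2⟩ := exists_between hlt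
    have hct : c ≠ ⊤ := ne_top_of_lt hc2
    have hc0 : 0 < c.toReal := ENNReal.toReal_pos (by rintro rfl; simp at hc1) hct
    have := h c.toReal hc0 (by rwa [ENNReal.ofReal_toReal hct])
    rw [ENNReal.ofReal_toReal hct] at this
    exact absurd this (not_lt.2 hc1.le)
  exact le_antisymm (key fun s hs => (h s hs).1) (key fun s hs => (h s hs).2)

theorem tauP_pos (fl : IsFlow Φ) (hΩ : IsOpen Ω) {x : Fin N → ℝ} (hx : x ∈ Ω) :
    0 < tauP Ω Φ x := by
  have h1 : ∀ᶠ r in 𝓝 (0:ℝ), Φ x r ∈ Ω :=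
    (fl.cont_time x).continuousAt.eventually (hΩ.mem_nhds (by rwa [fl.zero]))
  obtain ⟨ε, hε, hb⟩ := Metric.eventually_nhds_iff.1 h1
  refine lt_of_le_of_lt bot_le ((lt_tauP_iff fl hΩ (half_pos hε)).2 fun r hr => hb ?_)
  rw [Real.dist_eq, sub_zero, abs_of_pos hr.1]; linarith [hr.2]

theorem tauM_pos (fl : IsFlow Φ) (hΩ : IsOpen Ω) {x : Fin N → ℝ} (hx : x ∈ Ω) :
    0 < tauM Ω Φ x := tauP_pos (Φ := fun x s => Φ x (-s)) fl.rev hΩ hx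

theorem flow_mem_of_lt_tauP (fl : IsFlow Φ) (hΩ : IsOpen Ω) {x : Fin N → ℝ} {s : ℝ} (hs : 0 < s)
    (h : ENNReal.ofReal s < tauP Ω Φ x) : Φ x s ∈ Ω :=
  (lt_tauP_iff fl hΩ hs).1 h s ⟨hs, le_rfl⟩

theorem flow_mem_of_lt_tauM (fl : IsFlow Φ) (hΩ : IsOpen Ω) {x : Fin N → ℝ} {s : ℝ} (hs : 0 < s)
    (h : ENNReal.ofReal s < tauM Ω Φ x) : Φ x (-s) ∈ Ω :=
  (lt_tauM_iff fl hΩ hs).1 h s ⟨hs, le_rfl⟩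

/-- The exit point itself is outside `Ω`. -/
theorem exit_notMem (fl : IsFlow Φ) (hΩ : IsOpen Ω) {x : Fin N → ℝ} (h0 : 0 < tauP Ω Φ x)
    (ht : tauP Ω Φ x < ⊤) : Φ x (tauP Ω Φ x).toReal ∉ Ω := by
  intro hm
  have hp : 0 < (tauP Ω Φ x).toReal := ENNReal.toReal_pos h0.ne' ht.ne
  have : ENNReal.ofReal (tauP Ω Φ x).toReal < tauP Ω Φ x := by
    refine (lt_tauP_iff fl hΩ hp).2 fun r hr => ?_
    rcases hr.2.lt_or_eq with h | h
    · refine flow_mem_of_lt_tauP fl hΩ hr.1 ?_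
      exact (ENNReal.ofReal_lt_iff_lt_toReal hr.1.le ht.ne).2 h
    · rwa [h]
  rw [ENNReal.ofReal_toReal ht.ne] at this
  exact lt_irrefl _ this

/-- Moving forward along a characteristic by `t` decreases the forward exit time by `t`. -/
theorem tauP_flow (fl : IsFlow Φ) (hΩ : IsOpen Ω) {x : Fin N → ℝ} {t : ℝ} (ht : 0 ≤ t)
    (h : ENNReal.ofReal t < tauP Ω Φ x) :
    tauP Ω Φ (Φ x t) = tauP Ω Φ x - ENNReal.ofReal t := by
  refine ennreal_eq_of_lt_iff fun s hs => ?_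
  rw [lt_tauP_iff fl hΩ hs, lt_tsub_iff_left, ← ENNReal.ofReal_add ht hs.le,
    lt_tauP_iff fl hΩ (by linarith)]
  · constructor
    · intro h' r hr
      rcases le_or_gt r t with h1 | h1
      · exact (lt_tauP_iff fl hΩ (hr.1.trans_le h1)).1 h r ⟨hr.1, h1⟩
      · have := h' (r - t) ⟨by linarith, by linarith [hr.2]⟩
        rwa [fl.add, add_sub_cancel] at this
    · intro h' r hr
      rw [fl.add]
      exact h' _ ⟨by linarith [hr.1], by linarith [hr.2]⟩

theorem tauM_flow (fl : IsFlow Φ) (hΩ : IsOpen Ω) {x : Fin N → ℝ} {t : ℝ} (ht : 0 ≤ t)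
    (h : ENNReal.ofReal t < tauM Ω Φ x) :
    tauM Ω Φ (Φ x (-t)) = tauM Ω Φ x - ENNReal.ofReal t :=
  tauP_flow (Φ := fun x s => Φ x (-s)) fl.rev hΩ ht h

/-- Moving forward from a point of `Ω` by `t` increases the backward exit time by `t`. -/
theorem tauM_flow_add (fl : IsFlow Φ) (hΩ : IsOpen Ω) {x : Fin N → ℝ} (hx : x ∈ Ω) {t : ℝ}
    (ht : 0 ≤ t) (h : ENNReal.ofReal t < tauP Ω Φ x) :
    tauM Ω Φ (Φ x t) = tauM Ω Φ x + ENNReal.ofReal t := by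
  rcases ht.eq_or_lt with rfl | ht0
  · simp [fl.zero]
  have hlt : ENNReal.ofReal t < tauM Ω Φ (Φ x t) := by
    refine (lt_tauM_iff fl hΩ ht0).2 fun r hr => ?_
    rw [fl.add]
    rcases hr.2.lt_or_eq with h1 | h1
    · exact (lt_tauP_iff fl hΩ ht0).1 h _ ⟨by linarith, by linarith [hr.1]⟩
    · simpa [h1, fl.zero] using hx
  have := tauM_flow fl hΩ ht hlt
  rw [fl.add, add_neg_cancel, fl.zero] at this
  rw [this, tsub_add_cancel_of_le hlt.le]

/-- Starting outside `Ω` and entering it at once, the backward exit time is the elapsed time. -/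
theorem tauM_flow_enter (fl : IsFlow Φ) (hΩ : IsOpen Ω) {y : Fin N → ℝ} (hy : y ∉ Ω) {t : ℝ}
    (ht : 0 < t) (h : ENNReal.ofReal t < tauP Ω Φ y) :
    tauM Ω Φ (Φ y t) = ENNReal.ofReal t := by
  refine le_antisymm (sInf_le ⟨t, ht, rfl, by simpa [fl.add, fl.zero] using hy⟩) ?_
  refine le_sInf ?_
  rintro _ ⟨r, hr, rfl, hrn⟩
  refine ENNReal.ofReal_le_ofReal ?_
  by_contra! hlt
  rw [fl.add] at hrn
  exact hrn ((lt_tauP_iff fl hΩ ht).1 h _ ⟨by linarith, by linarith⟩)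

/-- `Γ₋` consists of the points outside `Ω` whose forward characteristic enters `Ω` at once. -/
theorem GammaM_eq (fl : IsFlow Φ) (hΩ : IsOpen Ω) :
    GammaM Ω Φ = {y | y ∉ Ω ∧ 0 < tauP Ω Φ y} := by
  ext y
  constructor
  · rintro ⟨hf, x, hx, ht, rfl⟩
    have hp := tauM_pos fl hΩ hx
    have ha : 0 < (tauM Ω Φ x).toReal := ENNReal.toReal_pos hp.ne' ht.ne
    refine ⟨exit_notMem (Φ := fun x s => Φ x (-s)) fl.rev hΩ hp ht, ?_⟩
    refine lt_of_le_of_lt bot_le ((lt_tauP_iff fl hΩ ha).2 fun r hr => ?_)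
    rw [fl.add]
    rcases hr.2.lt_or_eq with h1 | h1
    · have := flow_mem_of_lt_tauM fl hΩ (x := x) (s := (tauM Ω Φ x).toReal - r) (by linarith)
        ((ENNReal.ofReal_lt_iff_lt_toReal (by linarith) ht.ne).2 (by linarith [hr.1]))
      convert this using 2; ring
    · simpa [h1, fl.zero] using hx
  · rintro ⟨hy, hp⟩
    obtain ⟨c, hc0, hc⟩ := exists_between hp
    have hct : c ≠ ⊤ := ne_top_of_lt hc
    have hs : 0 < c.toReal := ENNReal.toReal_pos hc0.ne' hct
    rw [← ENNReal.ofReal_toReal hct] at hc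
    set s := c.toReal
    refine ⟨?_, Φ y s, flow_mem_of_lt_tauP fl hΩ hs hc, ?_, ?_⟩
    · rw [hΩ.frontier_eq]
      refine ⟨?_, hy⟩
      have hl : Tendsto (Φ y) (𝓝[>] 0) (𝓝 y) := by
        have := (fl.cont_time y).tendsto 0
        rw [fl.zero] at this
        exact this.mono_left nhdsWithin_le_nhds
      refine mem_closure_of_tendsto hl ?_
      filter_upwards [Ioc_mem_nhdsGT hs] with r hr
      exact (lt_tauP_iff fl hΩ hs).1 hc r hr
    · rw [tauM_flow_enter fl hΩ hy hs hc]; simp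
    · rw [tauM_flow_enter fl hΩ hy hs hc, ENNReal.toReal_ofReal hs.le, fl.add]
      simp [fl.zero]

/-- The backward exit point of `x`. -/
def yM (Ω : Set (Fin N → ℝ)) (Φ : (Fin N → ℝ) → ℝ → (Fin N → ℝ)) (x : Fin N → ℝ) :
    Fin N → ℝ := Φ x (-(tauM Ω Φ x).toReal)

theorem yM_mem (fl : IsFlow Φ) (hΩ : IsOpen Ω) {x : Fin N → ℝ} (hx : x ∈ Ω)
    (ht : tauM Ω Φ x < ⊤) : yM Ω Φ x ∈ GammaM Ω Φ := by
  have hp := tauM_pos fl hΩ hx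
  have ha : 0 < (tauM Ω Φ x).toReal := ENNReal.toReal_pos hp.ne' ht.ne
  rw [GammaM_eq fl hΩ]
  refine ⟨exit_notMem (Φ := fun x s => Φ x (-s)) fl.rev hΩ hp ht, ?_⟩
  refine lt_of_le_of_lt bot_le ((lt_tauP_iff fl hΩ ha).2 fun r hr => ?_)
  rw [yM, fl.add]
  rcases hr.2.lt_or_eq with h1 | h1
  · have := flow_mem_of_lt_tauM fl hΩ (x := x) (s := (tauM Ω Φ x).toReal - r) (by linarith)
      ((ENNReal.ofReal_lt_iff_lt_toReal (by linarith) ht.ne).2 (by linarith [hr.1]))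
    convert this using 2; ring
  · simpa [h1, fl.zero] using hx

theorem tauP_yM (fl : IsFlow Φ) (hΩ : IsOpen Ω) {x : Fin N → ℝ} (hx : x ∈ Ω)
    (ht : tauM Ω Φ x < ⊤) : tauP Ω Φ (yM Ω Φ x) = tauM Ω Φ x + tauP Ω Φ x := by
  have hp := tauM_pos fl hΩ hx
  have ha : 0 < (tauM Ω Φ x).toReal := ENNReal.toReal_pos hp.ne' ht.ne
  have hlt : ENNReal.ofReal (tauM Ω Φ x).toReal < tauP Ω Φ (yM Ω Φ x) := by
    refine (lt_tauP_iff fl hΩ ha).2 fun r hr => ?_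
    rw [yM, fl.add]
    rcases hr.2.lt_or_eq with h1 | h1
    · have := flow_mem_of_lt_tauM fl hΩ (x := x) (s := (tauM Ω Φ x).toReal - r) (by linarith)
        ((ENNReal.ofReal_lt_iff_lt_toReal (by linarith) ht.ne).2 (by linarith [hr.1]))
      convert this using 2; ring
    · simpa [h1, fl.zero] using hx
  have := tauP_flow fl hΩ ha.le hlt
  rw [show Φ (yM Ω Φ x) (tauM Ω Φ x).toReal = x by simp [yM, fl.add, fl.zero],
    ENNReal.ofReal_toReal ht.ne] at this
  rw [ENNReal.ofReal_toReal ht.ne] at hlt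
  rw [this, add_tsub_cancel_of_le hlt.le]

/-- The backward exit point is constant along a characteristic, seen from a forward point `p`. -/
theorem yM_flow (fl : IsFlow Φ) (hΩ : IsOpen Ω) {p : Fin N → ℝ} {t : ℝ} (ht : 0 ≤ t)
    (h : ENNReal.ofReal t < tauM Ω Φ p) (hp : tauM Ω Φ p < ⊤) :
    yM Ω Φ (Φ p (-t)) = yM Ω Φ p := by
  rw [yM, yM, tauM_flow fl hΩ ht h, fl.add, ENNReal.toReal_sub_of_le h.le hp.ne,
    ENNReal.toReal_ofReal ht]
  congr 1; ring

theorem yM_flow_enter (fl : IsFlow Φ) (hΩ : IsOpen Ω) {y : Fin N → ℝ} (hy : y ∉ Ω) {t : ℝ}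
    (ht : 0 < t) (h : ENNReal.ofReal t < tauP Ω Φ y) : yM Ω Φ (Φ y t) = y := by
  rw [yM, tauM_flow_enter fl hΩ hy ht h, ENNReal.toReal_ofReal ht.le, fl.add]
  simp [fl.zero]

theorem isOpen_forall_flow_mem (fl : IsFlow Φ) (hΩ : IsOpen Ω) {K : Set ℝ} (hK : IsCompact K) :
    IsOpen {x | ∀ r ∈ K, Φ x r ∈ Ω} := by
  rw [isOpen_iff_mem_nhds]
  intro x hx
  refine hK.eventually_forall_of_forall_eventually (P := fun x r => Φ x r ∈ Ω) fun r hr => ?_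
  have : Continuous fun z : (Fin N → ℝ) × ℝ => Φ z.1 z.2 := fl.cont.comp continuous_swap
  exact this.continuousAt.eventually (hΩ.mem_nhds (hx r hr))

theorem measurable_tauP (fl : IsFlow Φ) (hΩ : IsOpen Ω) : Measurable (tauP Ω Φ) := by
  refine measurable_of_Iio fun a => ?_
  have : tauP Ω Φ ⁻¹' Iio a = ⋃ p : ℚ, ⋃ q : ℚ, ⋃ (_ : 0 < p ∧ ENNReal.ofReal q < a),
      {x | ∀ r ∈ Icc (p : ℝ) q, Φ x r ∈ Ω}ᶜ := by
    ext x
    simp only [mem_preimage, mem_Iio, mem_iUnion, mem_compl_iff, mem_ofPred_eq, not_forall,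
      exists_prop]
    constructor
    · intro h
      obtain ⟨_, ⟨r, hr, rfl, hrn⟩, hra⟩ := sInf_lt_iff.1 h
      obtain ⟨p, hp0, hpr⟩ := exists_rat_btwn hr
      have : ∃ q : ℚ, r < q ∧ ENNReal.ofReal q < a := by
        obtain ⟨c, hc, hca⟩ := exists_between hra
        have hct : c ≠ ⊤ := ne_top_of_lt hca
        have : r < c.toReal := (ENNReal.ofReal_lt_iff_lt_toReal hr.le hct).1 hc
        obtain ⟨q, hq1, hq2⟩ := exists_rat_btwn this
        refine ⟨q, hq1, lt_trans ?_ hca⟩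
        exact (ENNReal.ofReal_lt_iff_lt_toReal (hr.trans hq1).le hct).2 hq2
      obtain ⟨q, hrq, hq⟩ := this
      exact ⟨p, q, ⟨by exact_mod_cast hp0, hq⟩, r, ⟨hpr.le, hrq.le⟩, hrn⟩
    · rintro ⟨p, q, ⟨hp, hq⟩, r, hr, hrn⟩
      have hp' : (0:ℝ) < p := by exact_mod_cast hp
      refine lt_of_le_of_lt (sInf_le ⟨r, hp'.trans_le hr.1, rfl, hrn⟩) ?_
      exact lt_of_le_of_lt (ENNReal.ofReal_le_ofReal hr.2) hq
  rw [this]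
  refine MeasurableSet.iUnion fun p => MeasurableSet.iUnion fun q => MeasurableSet.iUnion fun _ =>
    (isOpen_forall_flow_mem fl hΩ isCompact_Icc).measurableSet.compl

theorem measurable_tauM (fl : IsFlow Φ) (hΩ : IsOpen Ω) : Measurable (tauM Ω Φ) :=
  measurable_tauP (Φ := fun x s => Φ x (-s)) fl.rev hΩ

theorem measurable_yM (fl : IsFlow Φ) (hΩ : IsOpen Ω) : Measurable (yM Ω Φ) :=
  fl.cont.measurable.comp (((measurable_tauM fl hΩ).ennreal_toReal.neg).prodMk measurable_id)

theorem measurableSet_GammaM (fl : IsFlow Φ) (hΩ : IsOpen Ω) : MeasurableSet (GammaM Ω Φ) := by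
  rw [GammaM_eq fl hΩ]
  exact hΩ.measurableSet.compl.inter (measurableSet_lt measurable_const (measurable_tauP fl hΩ))

end tau

end

/-! ### An exponential product rule -/

section

/-- Integration of the derivative of `e^{ks} A(s)`, where `A` is a primitive of an integrable function
and hence only absolutely continuous. -/
theorem exp_mul_sub {A α : ℝ → ℝ} {T : ℝ} (k : ℝ) (hT : 0 ≤ T)
    (hα : IntervalIntegrable α volume 0 T)
    (hA : ∀ t ∈ Icc 0 T, A t = A 0 + ∫ s in 0..t, α s) :
    Real.exp (k * T) * A T - A 0 = ∫ s in 0..T, Real.exp (k * s) * (k * A s + α s) := by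
  have hu : uIcc 0 T = Icc 0 T := uIcc_of_le hT
  set B : ℝ → ℝ := fun t => ∫ s in 0..t, α s
  have hB : AbsolutelyContinuousOnInterval B 0 T :=
    hα.absolutelyContinuousOnInterval_intervalIntegral (by simp [hT])
  have hE : AbsolutelyContinuousOnInterval (fun s => Real.exp (k * s)) 0 T := by
    have hs : ContDiffOn ℝ 1 (fun s => Real.exp (k * s)) (uIcc 0 T) := by fun_prop
    obtain ⟨K, hK⟩ := hs.exists_lipschitzOnWith one_ne_zero (convex_uIcc 0 T) isCompact_uIcc
    exact hK.absolutelyContinuousOnInterval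
  have h1 := hE.integral_deriv_mul_eq_sub hB
  have hd := hα.ae_hasDerivAt_integral
  have hEd : ∀ s, HasDerivAt (fun s => Real.exp (k * s)) (Real.exp (k * s) * k) s := fun s => by
    simpa using ((hasDerivAt_id s).const_mul k).exp
  have h2 : ∫ s in 0..T, Real.exp (k * s) * k * A 0 = Real.exp (k * T) * A 0 - A 0 := by
    rw [intervalIntegral.integral_mul_const,
      intervalIntegral.integral_eq_sub_of_hasDerivAt (fun s _ => hEd s)
        (by apply Continuous.intervalIntegrable; fun_prop)]
    simp; ring
  have e1 : ∫ s in 0..T, Real.exp (k * s) * (k * A s + α s) =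
      ∫ s in 0..T, (Real.exp (k * s) * k * A 0 +
        (deriv (fun s => Real.exp (k * s)) s * B s + Real.exp (k * s) * deriv B s)) := by
    refine intervalIntegral.integral_congr_ae ?_
    filter_upwards [hd] with s hs hsu
    have hsu' : s ∈ Icc 0 T := hu ▸ uIoc_subset_uIcc hsu
    rw [(hEd s).deriv, (hs (uIoc_subset_uIcc hsu) 0 (by simp [hT])).deriv, hA s hsu']
    ring
  rw [e1, intervalIntegral.integral_add, h2, h1, hA T ⟨hT, le_rfl⟩]
  · simp [B]; ring
  · apply Continuous.intervalIntegrable; fun_prop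
  · exact (hE.intervalIntegrable_deriv.mul_continuousOn hB.continuousOn).add
      (hB.intervalIntegrable_deriv.continuousOn_mul hE.continuousOn)

end

/-! ### Integration over parameter intervals -/

section

/-- The parameter interval `(0,τ)`, equal to `(0,∞)` when `τ = ∞`. -/
abbrev ivl (τ : ℝ≥0∞) : Set ℝ := {s : ℝ | 0 < s ∧ ENNReal.ofReal s < τ}

theorem ivl_top : ivl ⊤ = Ioi 0 := by ext s; simp [ivl]

theorem ivl_of_ne_top {τ : ℝ≥0∞} (h : τ ≠ ⊤) : ivl τ = Ioo 0 τ.toReal := by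
  ext s
  simp only [mem_ofPred_eq, mem_Ioo]
  exact and_congr_right fun hs => ENNReal.ofReal_lt_iff_lt_toReal hs.le h

theorem measurableSet_ivl (τ : ℝ≥0∞) : MeasurableSet (ivl τ) :=
  (measurableSet_lt measurable_const measurable_id).inter
    (measurableSet_lt ENNReal.measurable_ofReal measurable_const)

theorem volume_ivl (τ : ℝ≥0∞) : volume (ivl τ) = τ := by
  rcases eq_or_ne τ ⊤ with rfl | h
  · rw [ivl_top]; simp
  · rw [ivl_of_ne_top h]; simp [h]

theorem measurableSet_ivl_prod {α : Type*} [MeasurableSpace α] {τ : α → ℝ≥0∞}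
    (hτ : Measurable τ) : MeasurableSet {p : ℝ × α | p.1 ∈ ivl (τ p.2)} :=
  (measurableSet_lt measurable_const measurable_fst).inter
    (measurableSet_lt (ENNReal.measurable_ofReal.comp measurable_fst) (hτ.comp measurable_snd))

theorem measurable_lintegral_ivl {α : Type*} [MeasurableSpace α] {τ : α → ℝ≥0∞}
    (hτ : Measurable τ) {K : ℝ × α → ℝ≥0∞} (hK : Measurable K) :
    Measurable fun x => ∫⁻ s in ivl (τ x), K (s, x) := by
  have := (hK.indicator (measurableSet_ivl_prod hτ)).lintegral_prod_left' (μ := volume)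
  convert this using 2 with x
  rw [← lintegral_indicator (measurableSet_ivl _)]
  rfl

theorem measurable_integral_ivl {α : Type*} [MeasurableSpace α] {τ : α → ℝ≥0∞}
    (hτ : Measurable τ) {K : ℝ × α → ℝ} (hK : Measurable K) :
    Measurable fun x => ∫ s in ivl (τ x), K (s, x) := by
  have := ((hK.indicator (measurableSet_ivl_prod hτ)).stronglyMeasurable.integral_prod_left'
    (μ := volume)).measurable
  convert this using 2 with x
  rw [← integral_indicator (measurableSet_ivl _)]
  rfl

variable {N : ℕ} {Φ : (Fin N → ℝ) → ℝ → (Fin N → ℝ)} {Ω : Set (Fin N → ℝ)}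

/-- The part of `Ω` whose backward characteristics leave `Ω` in finite time. -/
abbrev OmM (Ω : Set (Fin N → ℝ)) (Φ : (Fin N → ℝ) → ℝ → (Fin N → ℝ)) : Set (Fin N → ℝ) :=
  {x ∈ Ω | tauM Ω Φ x < ⊤}

theorem measurableSet_OmM (fl : IsFlow Φ) (hΩ : IsOpen Ω) : MeasurableSet (OmM Ω Φ) :=
  hΩ.measurableSet.inter (measurableSet_lt (measurable_tauM fl hΩ) measurable_const)

theorem measurable_flow_neg (fl : IsFlow Φ) :
    Measurable fun p : ℝ × (Fin N → ℝ) => Φ p.2 (-p.1) := fl.rev.cont.measurable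

end

/-! ### Disintegration along characteristics -/

section

variable {N : ℕ} {Φ : (Fin N → ℝ) → ℝ → (Fin N → ℝ)} {Ω : Set (Fin N → ℝ)}

/-- `σ`-finiteness provides a positive bounded integrable weight. -/
theorem exists_weight (μ : Measure (Fin N → ℝ)) [SigmaFinite μ] :
    ∃ w : (Fin N → ℝ) → ℝ, Measurable w ∧ (∀ x, 0 < w x) ∧ (∀ x, w x ≤ 1) ∧ Integrable w μ := by
  obtain ⟨g, hg0, hgm, hgi⟩ := exists_pos_lintegral_lt_of_sigmaFinite μ one_ne_zero
  refine ⟨fun x => min (g x : ℝ) 1, by fun_prop, fun x => lt_min (by exact_mod_cast hg0 x) one_pos,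
    fun x => min_le_right _ _, ?_⟩
  have hgI : Integrable (fun x => (g x : ℝ)) μ := by
    refine ⟨by fun_prop, ?_⟩
    refine lt_of_eq_of_lt ?_ (hgi.trans ENNReal.one_lt_top)
    simp
  refine hgI.mono' (by fun_prop) (ae_of_all _ fun x => ?_)
  rw [Real.norm_of_nonneg (le_min (by positivity) zero_le_one)]
  exact min_le_left _ _

/-- The identity defining `μ₋`, alone. -/
def HalfBoundary (Ω : Set (Fin N → ℝ)) (Φ : (Fin N → ℝ) → ℝ → (Fin N → ℝ))
    (μ μm : Measure (Fin N → ℝ)) : Prop :=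
  ∀ f : (Fin N → ℝ) → ℝ, Integrable f (μ.restrict Ω) →
    ∫ x in OmM Ω Φ, f x ∂μ = ∫ y in GammaM Ω Φ, curveInt (fun s => f (Φ y s)) (tauP Ω Φ y) ∂μm

theorem notMem_of_mem_GammaM (fl : IsFlow Φ) (hΩ : IsOpen Ω) {y : Fin N → ℝ}
    (hy : y ∈ GammaM Ω Φ) : y ∉ Ω := by
  rw [GammaM_eq fl hΩ] at hy; exact hy.1

theorem tauP_pos_of_mem_GammaM (fl : IsFlow Φ) (hΩ : IsOpen Ω) {y : Fin N → ℝ}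
    (hy : y ∈ GammaM Ω Φ) : 0 < tauP Ω Φ y := by
  rw [GammaM_eq fl hΩ] at hy; exact hy.2

theorem sigmaFinite_of_pos_integrable {ν : Measure (Fin N → ℝ)} {S : Set (Fin N → ℝ)}
    (hS : MeasurableSet S) {G : (Fin N → ℝ) → ℝ}
    (hG : Integrable G (ν.restrict S)) (hpos : ∀ y ∈ S, 0 < G y) :
    SigmaFinite (ν.restrict S) := by
  obtain ⟨G', hG'm, hGG'⟩ := hG.1.aemeasurable
  have hI' : Integrable G' (ν.restrict S) := hG.congr hGG'
  have hae : ∀ᵐ y ∂ν.restrict S, 0 < G' y := by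
    filter_upwards [hGG', ae_restrict_mem hS] with y h1 h2
    rw [← h1]; exact hpos y h2
  refine ⟨⟨⟨fun n => {y | 1 / ((n : ℝ) + 1) ≤ G' y} ∪ {y | G' y ≤ 0}, fun _ => trivial, fun n => ?_,
    ?_⟩⟩⟩
  · refine (measure_union_le _ _).trans_lt ?_
    have h0 : ν.restrict S {y | G' y ≤ 0} = 0 := by
      rw [ae_iff] at hae
      simpa using hae
    rw [h0, add_zero]
    have := hI'.measure_norm_ge_lt_top (ε := 1 / ((n : ℝ) + 1)) (by positivity)
    refine lt_of_le_of_lt (measure_mono fun y hy => ?_) this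
    exact (show 1 / ((n : ℝ) + 1) ≤ G' y from hy).trans (le_abs_self _)
  · refine eq_univ_of_forall fun y => mem_iUnion.2 ?_
    rcases le_or_gt (G' y) 0 with h | h
    · exact ⟨0, Or.inr h⟩
    · obtain ⟨n, hn⟩ := exists_nat_one_div_lt h
      exact ⟨n, Or.inl hn.le⟩

/-- In the nondegenerate case `μ(Ω₋) > 0`, the identity between Bochner integrals that defines
`μ₋` extends to an identity between Lebesgue integrals of arbitrary nonnegative functions, and
`μ₋` is `σ`-finite on `Γ₋`. Nondegeneracy enters because an integrand on `Γ₋` whose Bochner integral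
does not vanish must be integrable. -/
theorem beals_nondeg (fl : IsFlow Φ) (hΩ : IsOpen Ω) {μ μm : Measure (Fin N → ℝ)} [SigmaFinite μ]
    (hb : HalfBoundary Ω Φ μ μm) (h0 : μ (OmM Ω Φ) ≠ 0) :
    SigmaFinite (μm.restrict (GammaM Ω Φ)) ∧
    ∀ f : (Fin N → ℝ) → ℝ≥0∞, Measurable f →
      ∫⁻ x in OmM Ω Φ, f x ∂μ
        = ∫⁻ y in GammaM Ω Φ, (∫⁻ s in ivl (tauP Ω Φ y), f (Φ y s)) ∂μm := by
  obtain ⟨w0, hw0m, hw0p, hw01, hw0i⟩ := exists_weight μ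
  have hτM := measurable_tauM fl hΩ
  have hΓ := measurableSet_GammaM fl hΩ
  have hOm := measurableSet_OmM fl hΩ
  -- along a curve issued from `Γ₋` this weight is at most `e^{-s}`, so it is integrable there even
  -- when the curve stays in `Ω` forever
  set w : (Fin N → ℝ) → ℝ := fun x => w0 x * Real.exp (-(tauM Ω Φ x).toReal) with hw
  have hwm : Measurable w := by
    have := hτM.ennreal_toReal
    fun_prop
  have hwp : ∀ x, 0 < w x := fun x => mul_pos (hw0p x) (Real.exp_pos _)
  have hwle : ∀ x, w x ≤ w0 x := fun x => by
    refine mul_le_of_le_one_right (hw0p x).le ?_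
    rw [Real.exp_le_one_iff]; simp
  have hwi : Integrable w μ := hw0i.mono' hwm.aestronglyMeasurable
    (ae_of_all _ fun x => by rw [Real.norm_of_nonneg (hwp x).le]; exact hwle x)
  have hwΦ : ∀ y ∈ GammaM Ω Φ, ∀ s ∈ ivl (tauP Ω Φ y), w (Φ y s) ≤ Real.exp (-s) := by
    intro y hy s hs
    have hy' := notMem_of_mem_GammaM fl hΩ hy
    simp only [hw]
    rw [tauM_flow_enter fl hΩ hy' hs.1 hs.2, ENNReal.toReal_ofReal hs.1.le]
    exact mul_le_of_le_one_left (Real.exp_pos _).le (hw01 _)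
  have hwmΦ : ∀ y, Measurable fun s => w (Φ y s) := fun y => hwm.comp (fl.cont_time y).measurable
  have hwΦi : ∀ y ∈ GammaM Ω Φ, IntegrableOn (fun s => w (Φ y s)) (ivl (tauP Ω Φ y)) := by
    intro y hy
    have h1 : IntegrableOn (fun s : ℝ => Real.exp (-s)) (ivl (tauP Ω Φ y)) :=
      (integrableOn_exp_neg_Ioi 0).mono_set fun s hs => hs.1
    refine Integrable.mono' h1 (hwmΦ y).aestronglyMeasurable ?_
    filter_upwards [ae_restrict_mem (measurableSet_ivl _)] with s hs
    rw [Real.norm_of_nonneg (hwp _).le]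
    exact hwΦ y hy s hs
  set G : (Fin N → ℝ) → ℝ := fun y => curveInt (fun s => w (Φ y s)) (tauP Ω Φ y) with hG
  have hGp : ∀ y ∈ GammaM Ω Φ, 0 < G y := by
    intro y hy
    refine (setIntegral_pos_iff_support_of_nonneg_ae (ae_of_all _ fun s => (hwp _).le)
      (hwΦi y hy)).2 ?_
    have : Function.support (fun s => w (Φ y s)) = univ := by
      ext s; simp [(hwp (Φ y s)).ne']
    rw [this, univ_inter]
    exact (volume_ivl _).symm ▸ tauP_pos_of_mem_GammaM fl hΩ hy
  have hGi : Integrable G (μm.restrict (GammaM Ω Φ)) := by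
    -- otherwise its Bochner integral takes the default value `0`, contradicting `∫_{Ω₋} w dμ > 0`
    by_contra hc
    have h1 := hb w hwi.restrict
    rw [integral_undef hc] at h1
    have h2 := (setIntegral_pos_iff_support_of_nonneg_ae
      (ae_of_all (μ.restrict (OmM Ω Φ)) fun x => (hwp x).le) hwi.integrableOn).2 (by
        have : Function.support w = univ := by
          ext s; simp [(hwp s).ne']
        rw [this, univ_inter]
        exact pos_iff_ne_zero.2 h0)
    exact h2.ne' h1
  refine ⟨sigmaFinite_of_pos_integrable hΓ hGi hGp, fun f hf => ?_⟩
  -- the identity for functions dominated by a multiple of `w`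
  have key : ∀ n : ℕ, ∀ f : (Fin N → ℝ) → ℝ, Measurable f → (∀ x, 0 ≤ f x) →
      (∀ x, f x ≤ n * w x) → ∫⁻ x in OmM Ω Φ, ENNReal.ofReal (f x) ∂μ
        = ∫⁻ y in GammaM Ω Φ, (∫⁻ s in ivl (tauP Ω Φ y), ENNReal.ofReal (f (Φ y s))) ∂μm := by
    intro n f hf hfp hfle
    have hfi : Integrable f μ := (hwi.const_mul (n : ℝ)).mono' hf.aestronglyMeasurable
      (ae_of_all _ fun x => by rw [Real.norm_of_nonneg (hfp x)]; exact hfle x)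
    have hfΦi : ∀ y ∈ GammaM Ω Φ, IntegrableOn (fun s => f (Φ y s)) (ivl (tauP Ω Φ y)) := by
      intro y hy
      refine Integrable.mono' ((hwΦi y hy).const_mul (n : ℝ))
        (hf.comp (fl.cont_time y).measurable).aestronglyMeasurable ?_
      exact ae_of_all _ fun s => by rw [Real.norm_of_nonneg (hfp _)]; exact hfle _
    set H : (Fin N → ℝ) → ℝ := fun y => curveInt (fun s => f (Φ y s)) (tauP Ω Φ y) with hH
    have hHp : ∀ y, 0 ≤ H y := fun y => integral_nonneg fun s => hfp _
    have hHm : Measurable H :=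
      measurable_integral_ivl (measurable_tauP fl hΩ) (hf.comp fl.cont.measurable)
    have hHi : Integrable H (μm.restrict (GammaM Ω Φ)) := by
      refine (hGi.const_mul (n : ℝ)).mono' hHm.aestronglyMeasurable ?_
      filter_upwards [ae_restrict_mem hΓ] with y hy
      rw [Real.norm_of_nonneg (hHp y), hH, hG]
      simp only [curveInt]
      rw [← integral_const_mul]
      exact integral_mono (hfΦi y hy) ((hwΦi y hy).const_mul (n : ℝ)) fun s => hfle _
    have h1 := hb f hfi.restrict
    rw [← ofReal_integral_eq_lintegral_ofReal hfi.restrict (ae_of_all _ hfp), h1,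
      ofReal_integral_eq_lintegral_ofReal hHi (ae_of_all _ hHp)]
    refine setLIntegral_congr_fun hΓ fun y hy => ?_
    exact ofReal_integral_eq_lintegral_ofReal (hfΦi y hy) (ae_of_all _ fun s => hfp _)
  -- the general case follows by truncation and monotone convergence
  let fn : ℕ → (Fin N → ℝ) → ℝ≥0∞ := fun n x => min (f x) (ENNReal.ofReal (n * w x))
  have hfnm : ∀ n, Measurable (fn n) := fun n => by
    exact hf.min (ENNReal.measurable_ofReal.comp (hwm.const_mul (n : ℝ)))
  have hfnmono : Monotone fn := fun n m hnm x => by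
    refine min_le_min le_rfl (ENNReal.ofReal_le_ofReal ?_)
    exact mul_le_mul_of_nonneg_right (by exact_mod_cast hnm) (hwp x).le
  have hfnsup : ∀ x, ⨆ n, fn n x = f x := by
    intro x
    refine le_antisymm (iSup_le fun n => min_le_left _ _) ?_
    refine le_of_forall_lt fun c hc => ?_
    have hct : c ≠ ⊤ := ne_top_of_lt hc
    obtain ⟨n, hn⟩ := exists_nat_gt (c.toReal / w x)
    refine lt_of_lt_of_le (lt_min hc ?_) (le_iSup (fun n => fn n x) n)
    rw [ENNReal.lt_ofReal_iff_toReal_lt hct]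
    rwa [div_lt_iff₀ (hwp x)] at hn
  have hfnkey : ∀ n, ∫⁻ x in OmM Ω Φ, fn n x ∂μ
      = ∫⁻ y in GammaM Ω Φ, (∫⁻ s in ivl (tauP Ω Φ y), fn n (Φ y s)) ∂μm := by
    intro n
    have hfin : ∀ x, fn n x ≠ ⊤ := fun x =>
      ne_top_of_le_ne_top ENNReal.ofReal_ne_top (min_le_right _ _)
    have := key n (fun x => (fn n x).toReal) (hfnm n).ennreal_toReal
      (fun x => ENNReal.toReal_nonneg) (fun x => by
        refine (ENNReal.toReal_mono ENNReal.ofReal_ne_top (min_le_right _ _)).trans ?_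
        rw [ENNReal.toReal_ofReal (by have := hwp x; positivity)])
    simpa only [ENNReal.ofReal_toReal (hfin _)] using this
  calc ∫⁻ x in OmM Ω Φ, f x ∂μ = ∫⁻ x in OmM Ω Φ, ⨆ n, fn n x ∂μ := by simp_rw [hfnsup]
    _ = ⨆ n, ∫⁻ x in OmM Ω Φ, fn n x ∂μ := lintegral_iSup hfnm hfnmono
    _ = ⨆ n, ∫⁻ y in GammaM Ω Φ, (∫⁻ s in ivl (tauP Ω Φ y), fn n (Φ y s)) ∂μm := by
        simp_rw [hfnkey]
    _ = ∫⁻ y in GammaM Ω Φ, (⨆ n, ∫⁻ s in ivl (tauP Ω Φ y), fn n (Φ y s)) ∂μm := by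
        refine (lintegral_iSup (fun n => ?_) fun n m hnm y => ?_).symm
        · exact measurable_lintegral_ivl (measurable_tauP fl hΩ)
            ((hfnm n).comp fl.cont.measurable)
        · exact lintegral_mono fun s => hfnmono hnm _
    _ = ∫⁻ y in GammaM Ω Φ, (∫⁻ s in ivl (tauP Ω Φ y), f (Φ y s)) ∂μm := by
        refine lintegral_congr fun y => ?_
        have := lintegral_iSup (μ := volume.restrict (ivl (tauP Ω Φ y)))
          (f := fun n s => fn n (Φ y s)) (fun n => (hfnm n).comp (fl.cont_time y).measurable)
          fun n m hnm s => hfnmono hnm _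
        rw [← this]
        simp_rw [hfnsup]

/-- In the degenerate case `μ(Ω₋) = 0`, every `μ₋`-integrable function vanishes `μ₋`-a.e.
on `Γ₋`. -/
theorem ae_zero_of_degenerate (fl : IsFlow Φ) (hΩ : IsOpen Ω) {μ μm : Measure (Fin N → ℝ)}
    (hb : HalfBoundary Ω Φ μ μm) (h0 : μ (OmM Ω Φ) = 0) {u : (Fin N → ℝ) → ℝ}
    (hu : Integrable u (μm.restrict (GammaM Ω Φ))) :
    u =ᵐ[μm.restrict (GammaM Ω Φ)] 0 := by
  have hΓ := measurableSet_GammaM fl hΩ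
  have hOm := measurableSet_OmM fl hΩ
  have hτP := measurable_tauP fl hΩ
  -- a function supported in `Ω₋` whose integral along the curve from `y` is `|u y| (1 - e^{-τ₊})`
  set f : (Fin N → ℝ) → ℝ := (OmM Ω Φ).indicator fun x =>
    Real.exp (-(tauM Ω Φ x).toReal) * |u (yM Ω Φ x)| with hf
  have hf0 : f =ᵐ[μ.restrict Ω] 0 := by
    have : ∀ᵐ x ∂μ, x ∉ OmM Ω Φ := measure_eq_zero_iff_ae_notMem.1 h0
    filter_upwards [ae_restrict_of_ae this] with x hx
    simp [hf, hx]
  have h1 := hb f ((integrable_zero _ _ _).congr hf0.symm)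
  rw [Measure.restrict_eq_zero.2 h0, integral_zero_measure] at h1
  set c : (Fin N → ℝ) → ℝ := fun y => ∫ s in ivl (tauP Ω Φ y), Real.exp (-s) with hc
  have hci : ∀ y, IntegrableOn (fun s : ℝ => Real.exp (-s)) (ivl (tauP Ω Φ y)) := fun y =>
    (integrableOn_exp_neg_Ioi 0).mono_set fun s hs => hs.1
  have hcm : Measurable c := measurable_integral_ivl hτP (K := fun p => Real.exp (-p.1))
    (by fun_prop)
  have hcnn : ∀ y, 0 ≤ c y := fun y => integral_nonneg fun s => (Real.exp_pos _).le
  have hc1 : ∀ y, c y ≤ 1 := fun y => by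
    rw [← integral_exp_neg_Ioi_zero]
    exact setIntegral_mono_set (integrableOn_exp_neg_Ioi 0) (ae_of_all _ fun s => (Real.exp_pos _).le)
      (Eventually.of_forall fun s hs => hs.1)
  have hcp : ∀ y ∈ GammaM Ω Φ, 0 < c y := by
    intro y hy
    refine (setIntegral_pos_iff_support_of_nonneg_ae (ae_of_all _ fun s => (Real.exp_pos _).le)
      (hci y)).2 ?_
    have : Function.support (fun s : ℝ => Real.exp (-s)) = univ := by
      ext s; simp
    rw [this, univ_inter, volume_ivl]
    exact tauP_pos_of_mem_GammaM fl hΩ hy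
  have h2 : ∫ y in GammaM Ω Φ, curveInt (fun s => f (Φ y s)) (tauP Ω Φ y) ∂μm
      = ∫ y in GammaM Ω Φ, c y * |u y| ∂μm := by
    refine setIntegral_congr_fun hΓ fun y hy => ?_
    have hy' := notMem_of_mem_GammaM fl hΩ hy
    simp only [curveInt, hc]
    rw [← integral_mul_const]
    refine setIntegral_congr_fun (measurableSet_ivl _) fun s hs => ?_
    have hτ := tauM_flow_enter fl hΩ hy' hs.1 hs.2
    have hm : Φ y s ∈ OmM Ω Φ := ⟨flow_mem_of_lt_tauP fl hΩ hs.1 hs.2, by rw [hτ]; simp⟩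
    simp only [hf]
    rw [indicator_of_mem hm, hτ, yM_flow_enter fl hΩ hy' hs.1 hs.2,
      ENNReal.toReal_ofReal hs.1.le]
  have hi : Integrable (fun y => c y * |u y|) (μm.restrict (GammaM Ω Φ)) := by
    refine hu.abs.mono' (hcm.aestronglyMeasurable.mul hu.abs.1) (ae_of_all _ fun y => ?_)
    rw [Real.norm_of_nonneg (mul_nonneg (hcnn y) (abs_nonneg _))]
    exact mul_le_of_le_one_left (abs_nonneg _) (hc1 y)
  rw [h2] at h1
  have h3 := (integral_eq_zero_iff_of_nonneg (fun y => mul_nonneg (hcnn y) (abs_nonneg _)) hi).1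
    h1.symm
  filter_upwards [h3, ae_restrict_mem hΓ] with y h4 h5
  simpa [(hcp y h5).ne'] using h4

/-- A measure `ν` on `Γ₋` that disintegrates `μ` on `Ω₋` along the characteristics. -/
structure Disint (Ω : Set (Fin N → ℝ)) (Φ : (Fin N → ℝ) → ℝ → (Fin N → ℝ))
    (μ ν : Measure (Fin N → ℝ)) : Prop where
  sfin : SigmaFinite ν
  supp : ∀ᵐ y ∂ν, y ∈ GammaM Ω Φ
  eq : ∀ f : (Fin N → ℝ) → ℝ≥0∞, Measurable f →
      ∫⁻ x in OmM Ω Φ, f x ∂μ = ∫⁻ y, (∫⁻ s in ivl (tauP Ω Φ y), f (Φ y s)) ∂ν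

/-- The measure `μ₋` may be replaced by a disintegrating measure, which is zero when `μ(Ω₋) = 0`. -/
theorem exists_disint (fl : IsFlow Φ) (hΩ : IsOpen Ω) {μ μm : Measure (Fin N → ℝ)} [SigmaFinite μ]
    (hb : HalfBoundary Ω Φ μ μm) :
    ∃ ν : Measure (Fin N → ℝ), Disint Ω Φ μ ν ∧
      ((ν = μm.restrict (GammaM Ω Φ) ∧ μ (OmM Ω Φ) ≠ 0) ∨ (ν = 0 ∧ μ (OmM Ω Φ) = 0)) := by
  by_cases h0 : μ (OmM Ω Φ) = 0
  · refine ⟨0, ⟨inferInstance, by simp, fun f hf => ?_⟩, Or.inr ⟨rfl, h0⟩⟩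
    simp [Measure.restrict_eq_zero.2 h0]
  · obtain ⟨h1, h2⟩ := beals_nondeg fl hΩ hb h0
    exact ⟨_, ⟨h1, ae_restrict_mem (measurableSet_GammaM fl hΩ), h2⟩, Or.inl ⟨rfl, h0⟩⟩

end

/-! ### Null sets and integrability along characteristics -/

section

variable {N : ℕ} {Φ : (Fin N → ℝ) → ℝ → (Fin N → ℝ)} {Ω : Set (Fin N → ℝ)}

theorem mp_flow (fl : IsFlow Φ) {μ : Measure (Fin N → ℝ)}
    (hinv : ∀ (A : Set (Fin N → ℝ)) (t : ℝ), MeasurableSet A →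
      μ ((fun x => Φ x t) '' A) = μ A) (t : ℝ) :
    MeasurePreserving (fun x => Φ x t) μ μ := by
  refine ⟨(fl.cont_space t).measurable, Measure.ext fun A hA => ?_⟩
  rw [Measure.map_apply (fl.cont_space t).measurable hA, ← hinv A (-t) hA]
  congr 1
  ext x
  constructor
  · intro hx
    exact ⟨Φ x t, hx, by simp only []; rw [fl.add]; simp [fl.zero]⟩
  · rintro ⟨y, hy, rfl⟩
    simp only [mem_preimage]
    rw [fl.add]
    simpa [fl.zero] using hy

theorem mp_rev {μ : Measure (Fin N → ℝ)} (hmp : ∀ t, MeasurePreserving (fun x => Φ x t) μ μ)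
    (t : ℝ) : MeasurePreserving (fun x => (fun x s => Φ x (-s)) x t) μ μ := hmp (-t)

/-- The flow preserves `ds ⊗ μ` when it acts on the second coordinate for the time given by the first;
Fubini then turns statements about `μ` into statements along characteristics. -/
theorem mp_skew (fl : IsFlow Φ) {μ : Measure (Fin N → ℝ)} [SigmaFinite μ]
    (hmp : ∀ t, MeasurePreserving (fun x => Φ x t) μ μ) :
    MeasurePreserving (fun p : ℝ × (Fin N → ℝ) => (p.1, Φ p.2 p.1))
      (volume.prod μ) (volume.prod μ) :=
  (MeasurePreserving.id volume).skew_product (g := fun s x => Φ x s) fl.cont.measurable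
    (ae_of_all _ fun s => (hmp s).map_eq)

/-- A property valid almost everywhere in `Ω` is valid almost everywhere along almost every
characteristic, as long as that characteristic lies in `Ω`. -/
theorem ae_along (fl : IsFlow Φ) {μ : Measure (Fin N → ℝ)} [SigmaFinite μ]
    (hmp : ∀ t, MeasurePreserving (fun x => Φ x t) μ μ) (hΩ : IsOpen Ω)
    {P : (Fin N → ℝ) → Prop} (hP : ∀ᵐ x ∂μ.restrict Ω, P x) :
    ∀ᵐ x ∂μ, ∀ᵐ s : ℝ, Φ x s ∈ Ω → P (Φ x s) := by
  rw [ae_restrict_iff' hΩ.measurableSet] at hP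
  have h1 : ∀ᵐ p ∂(volume : Measure ℝ).prod μ, p.2 ∈ Ω → P p.2 :=
    Measure.quasiMeasurePreserving_snd.ae hP
  have h2 := (mp_skew fl hmp).quasiMeasurePreserving.ae h1
  have h3 : ∀ᵐ p ∂μ.prod (volume : Measure ℝ), Φ p.1 p.2 ∈ Ω → P (Φ p.1 p.2) :=
    (Measure.measurePreserving_swap (μ := μ) (ν := (volume : Measure ℝ))).quasiMeasurePreserving.ae
      h2
  exact Measure.ae_ae_of_ae_prod h3

/-- The function `s ↦ e^{-λ|s|} g(Φ(x,s))`, extended by zero where the curve through `x` is outside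
`Ω`, is integrable on the whole line. This holds for almost every `x` and is stable under the flow. -/
def Good (Ω : Set (Fin N → ℝ)) (Φ : (Fin N → ℝ) → ℝ → (Fin N → ℝ)) (lam : ℝ)
    (g : (Fin N → ℝ) → ℝ) (x : Fin N → ℝ) : Prop :=
  Integrable fun s : ℝ => Real.exp (-(lam * |s|)) * Ω.indicator g (Φ x s)

theorem integrable_exp_abs {lam : ℝ} (hlam : 0 < lam) :
    Integrable fun s : ℝ => Real.exp (-(lam * |s|)) := by
  have h1 : IntegrableOn (fun s : ℝ => Real.exp (-(lam * s))) (Ioi 0) := by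
    simpa only [neg_mul] using exp_neg_integrableOn_Ioi 0 hlam
  have h2 : IntegrableOn (fun s : ℝ => Real.exp (-(lam * |s|))) (Ioi 0) :=
    h1.congr_fun (fun s hs => by simp only [abs_of_pos (mem_Ioi.1 hs)]) measurableSet_Ioi
  have h3 : IntegrableOn (fun s : ℝ => Real.exp (-(lam * |s|))) (Iic 0) := by
    have h4 := Iff.mpr integrableOn_Ici_iff_integrableOn_Ioi h2
    have h5 := IntegrableOn.comp_neg h4
    simpa using h5
  have := h3.union h2
  rwa [Iic_union_Ioi, integrableOn_univ] at this

theorem ae_good (fl : IsFlow Φ) {μ : Measure (Fin N → ℝ)} [SigmaFinite μ]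
    (hmp : ∀ t, MeasurePreserving (fun x => Φ x t) μ μ) (hΩ : IsOpen Ω)
    {lam : ℝ} (hlam : 0 < lam) {g : (Fin N → ℝ) → ℝ} (hg : Integrable g (μ.restrict Ω)) :
    ∀ᵐ x ∂μ, Good Ω Φ lam g x := by
  have h0 : Integrable (Ω.indicator g) μ := (integrable_indicator_iff hΩ.measurableSet).2 hg
  have h1 := (integrable_exp_abs hlam).mul_prod h0
  have h2 := (mp_skew fl hmp).integrable_comp_of_integrable h1
  have h3 := h2.prod_left_ae
  exact h3

theorem Good.flow (fl : IsFlow Φ) {lam : ℝ} (hlam : 0 < lam) (hΩ : IsOpen Ω)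
    {g : (Fin N → ℝ) → ℝ} (hg : Measurable g)
    {x : Fin N → ℝ} (h : Good Ω Φ lam g x) (t : ℝ) : Good Ω Φ lam g (Φ x t) := by
  have h1 := (Integrable.comp_add_right h t).const_mul (Real.exp (lam * |t|))
  refine Integrable.mono h1 ?_ (ae_of_all _ fun s => ?_)
  · have := (hg.indicator hΩ.measurableSet).comp (fl.cont_time (Φ x t)).measurable
    have h2 : Measurable fun s : ℝ => Real.exp (-(lam * |s|)) := by fun_prop
    exact (h2.mul this).aestronglyMeasurable
  · rw [fl.add, add_comm t s, ← mul_assoc, norm_mul, norm_mul]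
    refine mul_le_mul_of_nonneg_right ?_ (norm_nonneg _)
    rw [← Real.exp_add, Real.norm_of_nonneg (Real.exp_pos _).le,
      Real.norm_of_nonneg (Real.exp_pos _).le, Real.exp_le_exp]
    have := abs_add_le s t
    nlinarith

theorem Good.integrableOn (fl : IsFlow Φ) (hΩ : IsOpen Ω) {lam : ℝ}
    {g : (Fin N → ℝ) → ℝ} {p : Fin N → ℝ} (h : Good Ω Φ lam g p) :
    IntegrableOn (fun r => Real.exp (-(lam * r)) * g (Φ p (-r))) (ivl (tauM Ω Φ p)) := by
  have h1 := h.comp_neg.integrableOn (s := ivl (tauM Ω Φ p))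
  refine h1.congr ?_
  filter_upwards [ae_restrict_mem (measurableSet_ivl _)] with s hs
  rw [indicator_of_mem (flow_mem_of_lt_tauM fl hΩ hs.1 hs.2), abs_neg, abs_of_pos hs.1]

/-- Null sets of `Ω₋` meet `ν`-almost every characteristic in a null set of parameters. -/
theorem Disint.ae_curve {μ ν : Measure (Fin N → ℝ)} (hd : Disint Ω Φ μ ν) (fl : IsFlow Φ)
    (hΩ : IsOpen Ω) {P : (Fin N → ℝ) → Prop} (hP : ∀ᵐ x ∂μ.restrict (OmM Ω Φ), P x) :
    ∀ᵐ y ∂ν, ∀ᵐ s ∂volume.restrict (ivl (tauP Ω Φ y)), P (Φ y s) := by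
  set Z := toMeasurable (μ.restrict (OmM Ω Φ)) {x | ¬ P x}
  have hZm : MeasurableSet Z := measurableSet_toMeasurable _ _
  have hZ : μ.restrict (OmM Ω Φ) Z = 0 := by rw [measure_toMeasurable]; exact hP
  have h1 := hd.eq (Z.indicator 1) (measurable_one.indicator hZm)
  rw [lintegral_indicator_one hZm, hZ] at h1
  have hm : Measurable fun y => ∫⁻ s in ivl (tauP Ω Φ y), Z.indicator (1 : (Fin N → ℝ) → ℝ≥0∞) (Φ y s) :=
    measurable_lintegral_ivl (measurable_tauP fl hΩ)
      ((measurable_one.indicator hZm).comp fl.cont.measurable)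
  filter_upwards [(lintegral_eq_zero_iff hm).1 h1.symm] with y hy
  have h2 := (lintegral_eq_zero_iff
    ((measurable_one.indicator hZm).comp (fl.cont_time y).measurable)).1 hy
  filter_upwards [h2] with s hs
  by_contra hc
  have : Φ y s ∈ Z := subset_toMeasurable _ _ hc
  simp [this] at hs

/-- `ν`-almost every characteristic contains a point with a property valid almost everywhere
in `Ω₋`. -/
theorem Disint.ae_exists {μ ν : Measure (Fin N → ℝ)} (hd : Disint Ω Φ μ ν) (fl : IsFlow Φ)
    (hΩ : IsOpen Ω) {P : (Fin N → ℝ) → Prop} (hP : ∀ᵐ x ∂μ.restrict (OmM Ω Φ), P x) :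
    ∀ᵐ y ∂ν, ∃ s ∈ ivl (tauP Ω Φ y), P (Φ y s) := by
  filter_upwards [hd.ae_curve fl hΩ hP, hd.supp] with y hy hyΓ
  have hne : (volume.restrict (ivl (tauP Ω Φ y))) ≠ 0 := by
    rw [Ne, Measure.restrict_eq_zero, volume_ivl]
    exact (tauP_pos_of_mem_GammaM fl hΩ hyΓ).ne'
  have : (ae (volume.restrict (ivl (tauP Ω Φ y)))).NeBot := ae_neBot.2 hne
  obtain ⟨s, h1, h2⟩ := (hy.and (ae_restrict_mem (measurableSet_ivl _))).exists
  exact ⟨s, h2, h1⟩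

theorem Disint.ae_yM {μ ν : Measure (Fin N → ℝ)} (hd : Disint Ω Φ μ ν) (fl : IsFlow Φ)
    (hΩ : IsOpen Ω) {P : (Fin N → ℝ) → Prop} (hP : ∀ᵐ y ∂ν, P y) :
    ∀ᵐ x ∂μ.restrict Ω, tauM Ω Φ x < ⊤ → P (yM Ω Φ x) := by
  set Z := toMeasurable ν {y | ¬ P y}
  have hZm : MeasurableSet Z := measurableSet_toMeasurable _ _
  have hZ : ν Z = 0 := by rw [measure_toMeasurable]; exact hP
  have hym := measurable_yM fl hΩ
  have h1 := hd.eq ((yM Ω Φ ⁻¹' Z).indicator 1) (measurable_one.indicator (hym hZm))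
  rw [lintegral_indicator_one (hym hZm)] at h1
  have h2 : ∫⁻ y, (∫⁻ s in ivl (tauP Ω Φ y),
      (yM Ω Φ ⁻¹' Z).indicator (1 : (Fin N → ℝ) → ℝ≥0∞) (Φ y s)) ∂ν = 0 := by
    rw [← lintegral_zero (μ := ν)]
    refine lintegral_congr_ae ?_
    filter_upwards [hd.supp, measure_eq_zero_iff_ae_notMem.1 hZ] with y hy hyZ
    rw [← lintegral_zero (μ := volume.restrict (ivl (tauP Ω Φ y)))]
    refine setLIntegral_congr_fun (measurableSet_ivl _) fun s hs => ?_
    refine indicator_of_notMem ?_ _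
    rwa [mem_preimage, yM_flow_enter fl hΩ (notMem_of_mem_GammaM fl hΩ hy) hs.1 hs.2]
  rw [h2] at h1
  rw [ae_restrict_iff' hΩ.measurableSet]
  have h3 := (ae_restrict_iff' (measurableSet_OmM fl hΩ)).1 (measure_eq_zero_iff_ae_notMem.1 h1)
  filter_upwards [h3] with x hx hxΩ hxt
  by_contra hc
  exact hx ⟨hxΩ, hxt⟩ (subset_toMeasurable _ _ hc)

theorem Disint.ae_good (fl : IsFlow Φ) {μ ν : Measure (Fin N → ℝ)} [SigmaFinite μ]
    (hd : Disint Ω Φ μ ν)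
    (hmp : ∀ t, MeasurePreserving (fun x => Φ x t) μ μ) (hΩ : IsOpen Ω)
    {lam : ℝ} (hlam : 0 < lam) {g : (Fin N → ℝ) → ℝ} (hgm : Measurable g)
    (hg : Integrable g (μ.restrict Ω)) :
    ∀ᵐ y ∂ν, Good Ω Φ lam g y := by
  filter_upwards [hd.ae_exists fl hΩ (ae_restrict_of_ae (_root_.ae_good fl hmp hΩ hlam hg))]
    with y hy
  obtain ⟨s, -, hs⟩ := hy
  have := hs.flow fl hlam hΩ hgm (-s)
  rw [fl.add] at this
  simpa [fl.zero] using this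

theorem Good.of_rev {lam : ℝ} {g : (Fin N → ℝ) → ℝ} {x : Fin N → ℝ}
    (h : Good Ω (fun x s => Φ x (-s)) lam g x) : Good Ω Φ lam g x := by
  have := h.comp_neg
  simpa [Good] using this

end

/-! ### Transport equation and traces -/

section

variable {N : ℕ} {Φ : (Fin N → ℝ) → ℝ → (Fin N → ℝ)} {Ω : Set (Fin N → ℝ)}

theorem mem_of_between (fl : IsFlow Φ) (hΩ : IsOpen Ω) {x : Fin N → ℝ} (hx : x ∈ Ω) {t₁ t₂ : ℝ}
    (h1 : ENNReal.ofReal (-t₁) < tauM Ω Φ x) (h2 : ENNReal.ofReal t₂ < tauP Ω Φ x) {s : ℝ}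
    (hs : s ∈ Icc t₁ t₂) : Φ x s ∈ Ω := by
  rcases lt_trichotomy s 0 with h | rfl | h
  · have := flow_mem_of_lt_tauM fl hΩ (s := -s) (by linarith)
      ((ENNReal.ofReal_le_ofReal (by linarith [hs.1])).trans_lt h1)
    simpa using this
  · rwa [fl.zero]
  · exact flow_mem_of_lt_tauP fl hΩ h ((ENNReal.ofReal_le_ofReal hs.2).trans_lt h2)

/-- The discounted solution transported backwards along a characteristic loses exactly the
discounted source met in between. -/
theorem bvpSol_shift (fl : IsFlow Φ) (hΩ : IsOpen Ω) {lam : ℝ}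
    {g u : (Fin N → ℝ) → ℝ} {p : Fin N → ℝ} (hp : Good Ω Φ lam g p) {t : ℝ} (ht : 0 ≤ t)
    (h : ENNReal.ofReal t < tauM Ω Φ p) :
    Real.exp (-(lam * t)) * bvpSol Ω Φ lam g u (Φ p (-t))
      = bvpSol Ω Φ lam g u p - ∫ s in 0..t, Real.exp (-(lam * s)) * g (Φ p (-s)) := by
  set φ : ℝ → ℝ := fun s => Real.exp (-(lam * s)) * g (Φ p (-s)) with hφ
  have hI : IntegrableOn φ (ivl (tauM Ω Φ p)) := hp.integrableOn fl hΩ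
  have hτ := tauM_flow fl hΩ ht h
  have hb : Real.exp (-(lam * t)) * (if tauM Ω Φ (Φ p (-t)) < ⊤ then
        Real.exp (-(lam * (tauM Ω Φ (Φ p (-t))).toReal)) * u (yM Ω Φ (Φ p (-t))) else 0)
      = if tauM Ω Φ p < ⊤ then
        Real.exp (-(lam * (tauM Ω Φ p).toReal)) * u (yM Ω Φ p) else 0 := by
    by_cases hp' : tauM Ω Φ p < ⊤
    · rw [if_pos hp', if_pos (by rw [hτ]; exact (tsub_le_self).trans_lt hp'),
        yM_flow fl hΩ ht h hp', hτ, ENNReal.toReal_sub_of_le h.le hp'.ne,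
        ENNReal.toReal_ofReal ht, ← mul_assoc, ← Real.exp_add]
      congr 2; ring
    · have hp2 : tauM Ω Φ p = ⊤ := by simpa using hp'
      rw [if_neg hp', if_neg (by rw [hτ, hp2]; simp), mul_zero]
  have hr : Real.exp (-(lam * t)) * resolv Ω Φ lam g (Φ p (-t))
      = ∫ s in ivl (tauM Ω Φ p) ∩ Ioi t, φ s := by
    have hset : ivl (tauM Ω Φ (Φ p (-t))) = (fun s => s + t) ⁻¹' (ivl (tauM Ω Φ p) ∩ Ioi t) := by
      ext s
      simp only [mem_ofPred_eq, mem_preimage, mem_inter_iff, mem_Ioi, hτ]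
      constructor
      · rintro ⟨h1, h2⟩
        refine ⟨⟨by linarith, ?_⟩, by linarith⟩
        rw [ENNReal.ofReal_add h1.le ht]
        exact lt_tsub_iff_right.1 h2
      · rintro ⟨⟨h1, h2⟩, h3⟩
        have h4 : 0 < s := by linarith
        refine ⟨h4, ?_⟩
        rw [ENNReal.ofReal_add h4.le ht] at h2
        exact lt_tsub_iff_right.2 h2
    have hm := measurePreserving_add_right (volume : Measure ℝ) t
    rw [← hm.setIntegral_preimage_emb (measurableEmbedding_addRight t), ← hset]
    simp only [resolv, curveInt]
    rw [← integral_const_mul]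
    refine setIntegral_congr_fun (measurableSet_ivl _) fun s hs => ?_
    simp only [hφ]
    rw [fl.add, ← mul_assoc, ← Real.exp_add]
    congr 2 <;> ring_nf
  have hsplit : ∫ s in ivl (tauM Ω Φ p) ∩ Ioi t, φ s
      = (∫ s in ivl (tauM Ω Φ p), φ s) - ∫ s in 0..t, φ s := by
    have hset : ivl (tauM Ω Φ p) ∩ Iic t = Ioc 0 t := by
      ext s
      simp only [mem_ofPred_eq, mem_inter_iff, mem_Iic, mem_Ioc]
      exact ⟨fun h1 => ⟨h1.1.1, h1.2⟩, fun h1 =>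
        ⟨⟨h1.1, (ENNReal.ofReal_le_ofReal h1.2).trans_lt h⟩, h1.2⟩⟩
    rw [intervalIntegral.integral_of_le ht, ← hset, eq_sub_iff_add_eq, ← compl_Iic,
      ← sdiff_eq, add_comm]
    exact integral_inter_add_sdiff measurableSet_Iic hI
  unfold bvpSol
  change _ * (_ + if tauM Ω Φ (Φ p (-t)) < ⊤ then
        Real.exp (-(lam * (tauM Ω Φ (Φ p (-t))).toReal)) * u (yM Ω Φ (Φ p (-t))) else 0) = _
  rw [mul_add, hb, hr, hsplit]
  simp only [resolv, curveInt, yM, hφ]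
  ring

theorem Good.intervalIntegrable (fl : IsFlow Φ) (hΩ : IsOpen Ω) {lam : ℝ}
    {g : (Fin N → ℝ) → ℝ} {p : Fin N → ℝ} (hp : Good Ω Φ lam g p) {t : ℝ} (ht : 0 ≤ t)
    (h : ENNReal.ofReal t < tauM Ω Φ p) :
    IntervalIntegrable (fun r => Real.exp (-(lam * r)) * g (Φ p (-r))) volume 0 t := by
  rw [intervalIntegrable_iff_integrableOn_Ioc_of_le ht]
  exact (hp.integrableOn fl hΩ).mono_set fun s hs =>
    ⟨hs.1, (ENNReal.ofReal_le_ofReal hs.2).trans_lt h⟩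

/-- Along a good characteristic the solution satisfies the transport equation in integrated
form. -/
theorem bvpSol_ode (fl : IsFlow Φ) (hΩ : IsOpen Ω) {lam : ℝ} (hlam : 0 < lam)
    {g u : (Fin N → ℝ) → ℝ} (hg : Measurable g) {x : Fin N → ℝ} (hx : x ∈ Ω)
    (hgood : Good Ω Φ lam g x) {t₁ t₂ : ℝ} (h12 : t₁ ≤ t₂)
    (h1 : ENNReal.ofReal (-t₁) < tauM Ω Φ x) (h2 : ENNReal.ofReal t₂ < tauP Ω Φ x) :
    bvpSol Ω Φ lam g u (Φ x t₁) - bvpSol Ω Φ lam g u (Φ x t₂)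
      = ∫ s in t₁..t₂, (lam * bvpSol Ω Φ lam g u (Φ x s) - g (Φ x s)) := by
  set f := bvpSol Ω Φ lam g u
  set p := Φ x t₂ with hpdef
  have hp : Good Ω Φ lam g p := hgood.flow fl hlam hΩ hg t₂
  have hpx : ∀ s, Φ p (-s) = Φ x (t₂ - s) := fun s => by rw [hpdef, fl.add]; congr 1
  rcases h12.eq_or_lt with rfl | hlt
  · simp [hpdef]
  have hT : 0 < t₂ - t₁ := by linarith
  have hTτ : ENNReal.ofReal (t₂ - t₁) < tauM Ω Φ p := by
    rw [lt_tauM_iff fl hΩ hT]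
    intro r hr
    rw [hpx]
    exact mem_of_between fl hΩ hx h1 h2 ⟨by linarith [hr.2], by linarith [hr.1]⟩
  have hI := hp.intervalIntegrable fl hΩ hT.le hTτ
  have key := exp_mul_sub lam hT.le (A := fun t => Real.exp (-(lam * t)) * f (Φ p (-t)))
    (α := fun s => -(Real.exp (-(lam * s)) * g (Φ p (-s)))) hI.neg (fun t ht => by
      have := bvpSol_shift fl hΩ (u := u) hp ht.1
        ((ENNReal.ofReal_le_ofReal ht.2).trans_lt hTτ)
      rw [this, intervalIntegral.integral_neg]
      simp [fl.zero]; rfl)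
  simp only [hpx, mul_zero, neg_zero, Real.exp_zero, one_mul] at key
  have hee : ∀ s : ℝ, ∀ a : ℝ, Real.exp (lam * s) * (Real.exp (-(lam * s)) * a) = a := by
    intro s a
    rw [← mul_assoc, ← Real.exp_add]; simp
  rw [hee] at key
  have : ∀ s, Real.exp (lam * s) * (lam * (Real.exp (-(lam * s)) * f (Φ x (t₂ - s))) +
      -(Real.exp (-(lam * s)) * g (Φ x (t₂ - s))))
      = lam * f (Φ x (t₂ - s)) - g (Φ x (t₂ - s)) := by
    intro s
    rw [← hee s (lam * f (Φ x (t₂ - s)) - g (Φ x (t₂ - s)))]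
    ring
  simp only [this] at key
  rw [intervalIntegral.integral_comp_sub_left (fun s => lam * f (Φ x s) - g (Φ x s)) t₂] at key
  simpa [fl.zero] using key

theorem tendsto_primitive {φ : ℝ → ℝ} {T : ℝ} (hT : 0 ≤ T)
    (hφ : IntervalIntegrable φ volume 0 T) {t : ℝ} (ht : t ∈ Icc 0 T) :
    Tendsto (fun t => ∫ s in 0..t, φ s) (𝓝[Icc 0 T] t) (𝓝 (∫ s in 0..t, φ s)) := by
  have := intervalIntegral.continuousOn_primitive_interval
    (f := φ) (a := 0) (b := T) (μ := volume)
    (by rw [uIcc_of_le hT]; exact (intervalIntegrable_iff_integrableOn_Icc_of_le hT).1 hφ)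
  rw [uIcc_of_le hT] at this
  exact this t ht

/-- The outgoing trace at `z` is the explicit formula evaluated at `z` itself. -/
theorem bvpSol_traceP (fl : IsFlow Φ) (hΩ : IsOpen Ω) {lam : ℝ}
    {g u : (Fin N → ℝ) → ℝ} {z : Fin N → ℝ} (hz : 0 < tauM Ω Φ z)
    (hgood : Good Ω Φ lam g z) :
    Tendsto (fun t => bvpSol Ω Φ lam g u (Φ z (-t))) (𝓝[>] (0 : ℝ))
      (𝓝 (bvpSol Ω Φ lam g u z)) := by
  obtain ⟨T, hT0, hTτ⟩ : ∃ T : ℝ, 0 < T ∧ ENNReal.ofReal T < tauM Ω Φ z := by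
    obtain ⟨r, h0, h1⟩ := ENNReal.lt_iff_exists_nnreal_btwn.1 hz
    exact ⟨r, by exact_mod_cast h0, by simpa using h1⟩
  have hI := hgood.intervalIntegrable fl hΩ hT0.le hTτ
  have h1 := (tendsto_primitive hT0.le hI (left_mem_Icc.2 hT0.le)).mono_left
    (nhdsWithin_mono 0 (Ioo_subset_Icc_self : Ioo 0 T ⊆ Icc 0 T))
  rw [intervalIntegral.integral_same, nhdsWithin_Ioo_eq_nhdsGT hT0] at h1
  have h2 : Tendsto (fun t : ℝ => Real.exp (lam * t)) (𝓝[>] 0) (𝓝 1) := by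
    have : Continuous fun t : ℝ => Real.exp (lam * t) := by fun_prop
    simpa using (this.tendsto 0).mono_left nhdsWithin_le_nhds
  have h3 := h2.mul (h1.const_sub (bvpSol Ω Φ lam g u z))
  rw [sub_zero, one_mul] at h3
  refine h3.congr' ?_
  filter_upwards [Ioo_mem_nhdsGT hT0] with t ht
  rw [← bvpSol_shift fl hΩ hgood ht.1.le ((ENNReal.ofReal_le_ofReal ht.2.le).trans_lt hTτ),
    ← mul_assoc, ← Real.exp_add]
  simp

/-- The incoming trace of the explicit solution at `y` is the boundary datum `u y`: the source term is
an integral over a shrinking interval. -/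
theorem bvpSol_traceM (fl : IsFlow Φ) (hΩ : IsOpen Ω) {lam : ℝ} (hlam : 0 < lam)
    {g u : (Fin N → ℝ) → ℝ} (hg : Measurable g) {y : Fin N → ℝ} (hy : y ∈ GammaM Ω Φ)
    (hgood : Good Ω Φ lam g y) :
    Tendsto (fun t => bvpSol Ω Φ lam g u (Φ y t)) (𝓝[>] (0 : ℝ)) (𝓝 (u y)) := by
  have hy1 := notMem_of_mem_GammaM fl hΩ hy
  obtain ⟨T, hT0, hTτ⟩ : ∃ T : ℝ, 0 < T ∧ ENNReal.ofReal T < tauP Ω Φ y := by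
    obtain ⟨r, h0, h1⟩ := ENNReal.lt_iff_exists_nnreal_btwn.1 (tauP_pos_of_mem_GammaM fl hΩ hy)
    exact ⟨r, by exact_mod_cast h0, by simpa using h1⟩
  set p := Φ y T with hpdef
  have hp : Good Ω Φ lam g p := hgood.flow fl hlam hΩ hg T
  have hτ : tauM Ω Φ p = ENNReal.ofReal T := tauM_flow_enter fl hΩ hy1 hT0 hTτ
  have hyM : yM Ω Φ p = y := yM_flow_enter fl hΩ hy1 hT0 hTτ
  set φ : ℝ → ℝ := fun s => Real.exp (-(lam * s)) * g (Φ p (-s)) with hφ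
  have hI : IntervalIntegrable φ volume 0 T := by
    rw [intervalIntegrable_iff_integrableOn_Ioo_of_le hT0.le]
    have := hp.integrableOn fl hΩ
    rwa [hτ, ivl_of_ne_top ENNReal.ofReal_ne_top, ENNReal.toReal_ofReal hT0.le] at this
  have hfp : bvpSol Ω Φ lam g u p - ∫ s in 0..T, φ s = Real.exp (-(lam * T)) * u y := by
    have h1 : bvpSol Ω Φ lam g u p = curveInt φ (tauM Ω Φ p) +
      (if tauM Ω Φ p < ⊤ then
      Real.exp (-(lam * (tauM Ω Φ p).toReal)) * u (yM Ω Φ p) else 0) := rfl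
    rw [h1, hyM, hτ, if_pos ENNReal.ofReal_lt_top, ENNReal.toReal_ofReal hT0.le, curveInt,
      intervalIntegral.integral_of_le hT0.le, integral_Ioc_eq_integral_Ioo]
    have h2 := ivl_of_ne_top (τ := ENNReal.ofReal T) ENNReal.ofReal_ne_top
    rw [ENNReal.toReal_ofReal hT0.le] at h2
    change (∫ s in ivl (ENNReal.ofReal T), φ s) + _ - _ = _
    rw [h2]; ring
  have h1 := (tendsto_primitive hT0.le hI (right_mem_Icc.2 hT0.le)).mono_left
    (nhdsWithin_mono T (Ioo_subset_Icc_self : Ioo 0 T ⊆ Icc 0 T))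
  rw [nhdsWithin_Ioo_eq_nhdsLT hT0] at h1
  have h4 : Tendsto (fun t : ℝ => T - t) (𝓝[>] 0) (𝓝[<] T) := by
    refine tendsto_nhdsWithin_iff.2 ⟨?_, ?_⟩
    · have : Continuous fun t : ℝ => T - t := by fun_prop
      simpa using (this.tendsto 0).mono_left nhdsWithin_le_nhds
    · filter_upwards [self_mem_nhdsWithin] with t ht
      simpa using ht
  have h2 : Tendsto (fun t : ℝ => Real.exp (lam * (T - t))) (𝓝[>] 0)
      (𝓝 (Real.exp (lam * T))) := by
    have : Continuous fun t : ℝ => Real.exp (lam * (T - t)) := by fun_prop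
    simpa using (this.tendsto 0).mono_left nhdsWithin_le_nhds
  have h3 := h2.mul ((h1.comp h4).const_sub (bvpSol Ω Φ lam g u p))
  rw [hfp, ← mul_assoc, ← Real.exp_add, add_neg_cancel, Real.exp_zero, one_mul] at h3
  refine h3.congr' ?_
  filter_upwards [Ioo_mem_nhdsGT hT0] with t ht
  have hlt : ENNReal.ofReal (T - t) < tauM Ω Φ p := by
    rw [hτ]; exact (ENNReal.ofReal_lt_ofReal_iff hT0).2 (by linarith [ht.1])
  simp only [Function.comp]
  rw [← bvpSol_shift fl hΩ hp (by linarith [ht.2]) hlt,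
    ← mul_assoc, ← Real.exp_add, hpdef, fl.add]
  simp

end

/-! ### Mass balance -/

section

variable {N : ℕ} {Φ : (Fin N → ℝ) → ℝ → (Fin N → ℝ)} {Ω : Set (Fin N → ℝ)}

/-- The backward segment of length `s` from `x` lies in `Ω` exactly when the forward segment of length
`s` from `Φ(x,-s)` does. -/
theorem mem_swap_iff (fl : IsFlow Φ) (hΩ : IsOpen Ω) (s : ℝ) (x : Fin N → ℝ) :
    (x ∈ Ω ∧ s ∈ ivl (tauM Ω Φ x)) ↔ (Φ x (-s) ∈ Ω ∧ s ∈ ivl (tauP Ω Φ (Φ x (-s)))) := by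
  simp only [mem_ofPred_eq]
  constructor
  · rintro ⟨hx, hs, h⟩
    refine ⟨flow_mem_of_lt_tauM fl hΩ hs h, hs, (lt_tauP_iff fl hΩ hs).2 fun r hr => ?_⟩
    rw [fl.add]
    rcases hr.2.eq_or_lt with h1 | h1
    · rw [h1, neg_add_cancel, fl.zero]; exact hx
    · have := (lt_tauM_iff fl hΩ hs).1 h (s - r) ⟨by linarith, by linarith [hr.1]⟩
      rwa [neg_sub, sub_eq_neg_add] at this
  · rintro ⟨hx, hs, h⟩
    have h2 := (lt_tauP_iff fl hΩ hs).1 h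
    refine ⟨?_, hs, (lt_tauM_iff fl hΩ hs).2 fun r hr => ?_⟩
    · have := h2 s ⟨hs, le_rfl⟩
      rwa [fl.add, neg_add_cancel, fl.zero] at this
    · rcases hr.2.eq_or_lt with h1 | h1
      · rwa [h1]
      · have := h2 (s - r) ⟨by linarith, by linarith [hr.1]⟩
        rw [fl.add] at this
        convert this using 2; ring

theorem lintegral_ivl_prod (hΩ : IsOpen Ω) {μ : Measure (Fin N → ℝ)} [SigmaFinite μ]
    {τ : (Fin N → ℝ) → ℝ≥0∞} (hτ : Measurable τ)
    {h : ℝ × (Fin N → ℝ) → ℝ≥0∞} (hh : Measurable h) :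
    ∫⁻ x in Ω, (∫⁻ s in ivl (τ x), h (s, x)) ∂μ
      = ∫⁻ p, {p : ℝ × (Fin N → ℝ) | p.2 ∈ Ω ∧ p.1 ∈ ivl (τ p.2)}.indicator h p
          ∂(volume : Measure ℝ).prod μ := by
  have hS : MeasurableSet {p : ℝ × (Fin N → ℝ) | p.2 ∈ Ω ∧ p.1 ∈ ivl (τ p.2)} :=
    (measurable_snd hΩ.measurableSet).inter (measurableSet_ivl_prod hτ)
  rw [lintegral_prod_symm' _ (hh.indicator hS), ← lintegral_indicator hΩ.measurableSet]
  refine lintegral_congr fun x => ?_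
  by_cases hx : x ∈ Ω
  · rw [indicator_of_mem hx, ← lintegral_indicator (measurableSet_ivl _)]
    refine lintegral_congr fun s => ?_
    by_cases hs : s ∈ ivl (τ x)
    · rw [indicator_of_mem hs, indicator_of_mem]; exact ⟨hx, hs⟩
    · rw [indicator_of_notMem hs, indicator_of_notMem]; exact fun hc => hs hc.2
  · rw [indicator_of_notMem hx]
    symm
    rw [← lintegral_zero (μ := (volume : Measure ℝ))]
    refine lintegral_congr fun s => ?_
    rw [indicator_of_notMem]; exact fun hc => hx hc.1

/-- Integrating over all backward segments inside `Ω` amounts to integrating over all forward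
segments, by invariance of `μ`. -/
theorem lintegral_swap (fl : IsFlow Φ) (hΩ : IsOpen Ω) {μ : Measure (Fin N → ℝ)} [SigmaFinite μ]
    (hmp : ∀ t, MeasurePreserving (fun x => Φ x t) μ μ)
    {h : ℝ × (Fin N → ℝ) → ℝ≥0∞} (hh : Measurable h) :
    ∫⁻ x in Ω, (∫⁻ s in ivl (tauM Ω Φ x), h (s, Φ x (-s))) ∂μ
      = ∫⁻ z in Ω, (∫⁻ s in ivl (tauP Ω Φ z), h (s, z)) ∂μ := by
  have hT := mp_skew fl.rev (mp_rev hmp)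
  have hh' : Measurable fun p : ℝ × (Fin N → ℝ) => h (p.1, Φ p.2 (-p.1)) :=
    hh.comp (measurable_fst.prodMk (measurable_flow_neg fl))
  have hS : MeasurableSet {p : ℝ × (Fin N → ℝ) | p.2 ∈ Ω ∧ p.1 ∈ ivl (tauP Ω Φ p.2)} :=
    (measurable_snd hΩ.measurableSet).inter (measurableSet_ivl_prod (measurable_tauP fl hΩ))
  rw [lintegral_ivl_prod hΩ (measurable_tauM fl hΩ) hh',
    lintegral_ivl_prod hΩ (measurable_tauP fl hΩ) hh, ← hT.lintegral_comp (hh.indicator hS)]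
  refine lintegral_congr fun p => ?_
  have := mem_swap_iff fl hΩ p.1 p.2
  by_cases hp : p.2 ∈ Ω ∧ p.1 ∈ ivl (tauM Ω Φ p.2)
  · rw [indicator_of_mem (by exact hp), indicator_of_mem (by exact this.1 hp)]
  · rw [indicator_of_notMem (by exact hp), indicator_of_notMem (by exact fun hc => hp (this.2 hc))]

/-- The discount factor `e^{-λ s}`, as an extended nonnegative real. -/
def dc (lam s : ℝ) : ℝ≥0∞ := ENNReal.ofReal (Real.exp (-(lam * s)))

theorem measurable_dc (lam : ℝ) : Measurable (dc lam) := by unfold dc; fun_prop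

/-- The discount factor `e^{-λ τ}` at a possibly infinite time, zero when `τ = ∞`. -/
def dcI (lam : ℝ) (τ : ℝ≥0∞) : ℝ≥0∞ := if τ < ⊤ then dc lam τ.toReal else 0

theorem measurable_dcI (lam : ℝ) : Measurable (dcI lam) :=
  Measurable.ite (measurableSet_lt measurable_id measurable_const)
    ((measurable_dc lam).comp measurable_id.ennreal_toReal) measurable_const

theorem integral_exp_ivl {lam : ℝ} (hlam : 0 < lam) (τ : ℝ≥0∞) :
    ENNReal.ofReal lam * (∫⁻ s in ivl τ, dc lam s) + dcI lam τ = 1 := by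
  have h0 : IntegrableOn (fun s : ℝ => Real.exp (-(lam * s))) (Ioi 0) := by
    simpa only [neg_mul] using exp_neg_integrableOn_Ioi 0 hlam
  have h1 : ∫⁻ s in ivl τ, dc lam s = ENNReal.ofReal (∫ s in ivl τ, Real.exp (-(lam * s))) :=
    (ofReal_integral_eq_lintegral_ofReal (h0.mono_set fun s hs => hs.1)
      (ae_of_all _ fun s => (Real.exp_pos _).le)).symm
  rw [h1, ← ENNReal.ofReal_mul hlam.le]
  rcases eq_or_ne τ ⊤ with rfl | hτ
  · have := integral_exp_mul_Ioi (a := -lam) (by linarith) 0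
    simp only [neg_mul] at this
    rw [ivl_top, this]
    simp [dcI, hlam.ne']
  · have h2 : ∫ s in ivl τ, Real.exp (-(lam * s)) = (1 - Real.exp (-(lam * τ.toReal))) / lam := by
      rw [ivl_of_ne_top hτ, ← integral_Ioc_eq_integral_Ioo,
        ← intervalIntegral.integral_of_le ENNReal.toReal_nonneg]
      have h3 : ∀ s ∈ uIcc 0 τ.toReal,
          HasDerivAt (fun s : ℝ => -Real.exp (-(lam * s)) / lam) (Real.exp (-(lam * s))) s := by
        intro s _
        have h5 : HasDerivAt (fun s : ℝ => -(lam * s)) (-(lam * 1)) s :=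
          ((hasDerivAt_id s).const_mul lam).neg
        have h6 : HasDerivAt (fun s : ℝ => -Real.exp (-(lam * s)) / lam)
          (-(Real.exp (-(lam * s)) * -(lam * 1)) / lam) s := h5.exp.neg.div_const lam
        refine h6.congr_deriv ?_
        field_simp
      rw [intervalIntegral.integral_eq_sub_of_hasDerivAt h3
        (by apply Continuous.intervalIntegrable; fun_prop)]
      simp; ring
    have h4 : Real.exp (-(lam * τ.toReal)) ≤ 1 := by
      rw [Real.exp_le_one_iff]
      have := mul_nonneg hlam.le (ENNReal.toReal_nonneg (a := τ)); linarith
    rw [h2, dcI, if_pos (lt_top_iff_ne_top.2 hτ), dc, mul_div_cancel₀ _ hlam.ne',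
      ← ENNReal.ofReal_add (by linarith) (Real.exp_pos _).le]
    simp

/-- The contribution of a nonnegative source `G` to the solution. -/
def srcE (Ω : Set (Fin N → ℝ)) (Φ : (Fin N → ℝ) → ℝ → (Fin N → ℝ)) (lam : ℝ)
    (G : (Fin N → ℝ) → ℝ≥0∞) (x : Fin N → ℝ) : ℝ≥0∞ :=
  ∫⁻ s in ivl (tauM Ω Φ x), dc lam s * G (Φ x (-s))

/-- The contribution of a nonnegative incoming datum `U` to the solution. -/
def bdE (Ω : Set (Fin N → ℝ)) (Φ : (Fin N → ℝ) → ℝ → (Fin N → ℝ)) (lam : ℝ)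
    (U : (Fin N → ℝ) → ℝ≥0∞) (x : Fin N → ℝ) : ℝ≥0∞ :=
  dcI lam (tauM Ω Φ x) * U (yM Ω Φ x)

theorem measurable_srcE (fl : IsFlow Φ) (hΩ : IsOpen Ω) (lam : ℝ)
    {G : (Fin N → ℝ) → ℝ≥0∞} (hG : Measurable G) : Measurable (srcE Ω Φ lam G) :=
  measurable_lintegral_ivl (measurable_tauM fl hΩ)
    (K := fun p => dc lam p.1 * G (Φ p.2 (-p.1)))
    (((measurable_dc lam).comp measurable_fst).mul (hG.comp (measurable_flow_neg fl)))

theorem measurable_bdE (fl : IsFlow Φ) (hΩ : IsOpen Ω) (lam : ℝ)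
    {U : (Fin N → ℝ) → ℝ≥0∞} (hU : Measurable U) : Measurable (bdE Ω Φ lam U) :=
  ((measurable_dcI lam).comp (measurable_tauM fl hΩ)).mul (hU.comp (measurable_yM fl hΩ))

theorem lintegral_srcE (fl : IsFlow Φ) (hΩ : IsOpen Ω) {μ : Measure (Fin N → ℝ)} [SigmaFinite μ]
    (hmp : ∀ t, MeasurePreserving (fun x => Φ x t) μ μ) (lam : ℝ)
    {G : (Fin N → ℝ) → ℝ≥0∞} (hG : Measurable G) :
    ∫⁻ x in Ω, srcE Ω Φ lam G x ∂μ
      = ∫⁻ z in Ω, (∫⁻ s in ivl (tauP Ω Φ z), dc lam s) * G z ∂μ := by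
  have := lintegral_swap fl hΩ hmp (h := fun p => dc lam p.1 * G p.2)
    (((measurable_dc lam).comp measurable_fst).mul (hG.comp measurable_snd))
  simp only [srcE]
  rw [this]
  refine lintegral_congr fun z => ?_
  exact lintegral_mul_const (G z) (measurable_dc lam)

theorem Disint.lintegral_Om {μ ν : Measure (Fin N → ℝ)} (hd : Disint Ω Φ μ ν) (fl : IsFlow Φ)
    (hΩ : IsOpen Ω) {f : (Fin N → ℝ) → ℝ≥0∞} (hf : Measurable f)
    (h0 : ∀ x, tauM Ω Φ x = ⊤ → f x = 0) :
    ∫⁻ x in Ω, f x ∂μ = ∫⁻ y, (∫⁻ s in ivl (tauP Ω Φ y), f (Φ y s)) ∂ν := by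
  rw [← hd.eq f hf, ← lintegral_indicator hΩ.measurableSet,
    ← lintegral_indicator (measurableSet_OmM fl hΩ)]
  refine lintegral_congr fun x => ?_
  by_cases hx : x ∈ Ω
  · rw [indicator_of_mem hx]
    by_cases ht : tauM Ω Φ x < ⊤
    · rw [indicator_of_mem (by exact ⟨hx, ht⟩)]
    · rw [indicator_of_notMem (fun hc => ht hc.2)]; exact h0 x (by simpa using ht)
  · rw [indicator_of_notMem hx, indicator_of_notMem (fun hc => hx hc.1)]

theorem lintegral_bdE (fl : IsFlow Φ) (hΩ : IsOpen Ω) {μ ν : Measure (Fin N → ℝ)}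
    (hd : Disint Ω Φ μ ν) (lam : ℝ)
    {U : (Fin N → ℝ) → ℝ≥0∞} (hU : Measurable U) :
    ∫⁻ x in Ω, bdE Ω Φ lam U x ∂μ
      = ∫⁻ y, (∫⁻ s in ivl (tauP Ω Φ y), dc lam s) * U y ∂ν := by
  rw [hd.lintegral_Om fl hΩ (measurable_bdE fl hΩ lam hU) (fun x hx => by simp [bdE, dcI, hx])]
  refine lintegral_congr_ae ?_
  filter_upwards [hd.supp] with y hy
  rw [← lintegral_mul_const _ (measurable_dc lam)]
  refine setLIntegral_congr_fun (measurableSet_ivl _) fun s hs => ?_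
  have hy' := notMem_of_mem_GammaM fl hΩ hy
  simp only [bdE]
  rw [yM_flow_enter fl hΩ hy' hs.1 hs.2, tauM_flow_enter fl hΩ hy' hs.1 hs.2, dcI,
    if_pos ENNReal.ofReal_lt_top, ENNReal.toReal_ofReal hs.1.le]

/-- The part of the source that reaches `Γ₊`: the source at `x` arrives discounted by `e^{-λ τ₊(x)}`. -/
theorem lintegral_srcE_bd (fl : IsFlow Φ) (hΩ : IsOpen Ω) {μ νp : Measure (Fin N → ℝ)}
    (hdp : Disint Ω (fun x s => Φ x (-s)) μ νp) (lam : ℝ)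
    {G : (Fin N → ℝ) → ℝ≥0∞} (hG : Measurable G) :
    ∫⁻ z, srcE Ω Φ lam G z ∂νp = ∫⁻ x in Ω, dcI lam (tauP Ω Φ x) * G x ∂μ := by
  have hD : Measurable fun x => dcI lam (tauP Ω Φ x) :=
    (measurable_dcI lam).comp (measurable_tauP fl hΩ)
  have hm : Measurable fun x => dcI lam (tauP Ω Φ x) * G x := hD.mul hG
  rw [hdp.lintegral_Om fl.rev hΩ hm (fun x hx => by
      rw [tauM_rev] at hx; simp [dcI, hx])]
  refine lintegral_congr_ae ?_
  filter_upwards [hdp.supp] with y hy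
  simp only [srcE]
  refine setLIntegral_congr_fun (measurableSet_ivl _) fun s hs => ?_
  have hy' := notMem_of_mem_GammaM fl.rev hΩ hy
  have h1 := tauM_flow_enter fl.rev hΩ hy' hs.1 hs.2
  rw [tauM_rev] at h1
  rw [h1, dcI, if_pos ENNReal.ofReal_lt_top, ENNReal.toReal_ofReal hs.1.le]

/-- Transfer between the two boundaries: the part of the incoming datum that reaches `Γ₊`. Both
sides are the integral over `Ω` of a function constant along the characteristics of finite
length, divided by that length. -/
theorem lintegral_bdE_bd (fl : IsFlow Φ) (hΩ : IsOpen Ω) {μ ν νp : Measure (Fin N → ℝ)}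
    (hd : Disint Ω Φ μ ν) (hdp : Disint Ω (fun x s => Φ x (-s)) μ νp) (lam : ℝ)
    {U : (Fin N → ℝ) → ℝ≥0∞} (hU : Measurable U) :
    ∫⁻ z, bdE Ω Φ lam U z ∂νp = ∫⁻ y, dcI lam (tauP Ω Φ y) * U y ∂ν := by
  have hτM := measurable_tauM fl hΩ
  have hτP := measurable_tauP fl hΩ
  -- `L x` is the length of the characteristic through `x`
  set L : (Fin N → ℝ) → ℝ≥0∞ := fun x => tauM Ω Φ x + tauP Ω Φ x with hL
  set f : (Fin N → ℝ) → ℝ≥0∞ := fun x => (dcI lam (L x) * U (yM Ω Φ x)) * (L x)⁻¹ with hf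
  have hLm : Measurable L := hτM.add hτP
  have hfm : Measurable f :=
    (((measurable_dcI lam).comp hLm).mul (hU.comp (measurable_yM fl hΩ))).mul hLm.inv
  have h1 := hd.lintegral_Om fl hΩ hfm (fun x hx => by simp [hf, hL, hx])
  have h2 := hdp.lintegral_Om fl.rev hΩ hfm (fun x hx => by
    rw [tauM_rev] at hx; simp [hf, hL, hx])
  have hcan : ∀ (τ a : ℝ≥0∞), 0 < τ → dcI lam τ * a * τ⁻¹ * τ = dcI lam τ * a := by
    intro τ a hτ
    rcases eq_or_ne τ ⊤ with rfl | h
    · simp [dcI]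
    · rw [mul_assoc, ENNReal.inv_mul_cancel hτ.ne' h, mul_one]
  trans ∫⁻ x in Ω, f x ∂μ
  · rw [h2]
    refine lintegral_congr_ae ?_
    filter_upwards [hdp.supp] with z hz
    have hz' := notMem_of_mem_GammaM fl.rev hΩ hz
    have hz0 : 0 < tauM Ω Φ z := tauP_pos_of_mem_GammaM fl.rev hΩ hz
    have : ∀ s ∈ ivl (tauM Ω Φ z), f (Φ z (-s))
        = dcI lam (tauM Ω Φ z) * U (yM Ω Φ z) * (tauM Ω Φ z)⁻¹ := by
      intro s hs
      have h3 := tauM_flow_enter fl.rev hΩ hz' hs.1 hs.2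
      rw [tauM_rev] at h3
      have h4 : L (Φ z (-s)) = tauM Ω Φ z := by
        simp only [hL]
        rw [h3, tauM_flow fl hΩ hs.1.le hs.2, tsub_add_cancel_of_le hs.2.le]
      simp only [hf]
      rw [h4]
      rcases eq_or_ne (tauM Ω Φ z) ⊤ with h5 | h5
      · simp [h5]
      · rw [yM_flow fl hΩ hs.1.le hs.2 (lt_top_iff_ne_top.2 h5)]
    rw [tauP_rev, setLIntegral_congr_fun (measurableSet_ivl _) this, setLIntegral_const,
      volume_ivl, hcan _ _ hz0, bdE]
  · rw [h1]
    refine lintegral_congr_ae ?_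
    filter_upwards [hd.supp] with y hy
    have hy' := notMem_of_mem_GammaM fl hΩ hy
    have hy0 := tauP_pos_of_mem_GammaM fl hΩ hy
    have : ∀ s ∈ ivl (tauP Ω Φ y), f (Φ y s)
        = dcI lam (tauP Ω Φ y) * U y * (tauP Ω Φ y)⁻¹ := by
      intro s hs
      have h4 : L (Φ y s) = tauP Ω Φ y := by
        simp only [hL]
        rw [tauM_flow_enter fl hΩ hy' hs.1 hs.2, tauP_flow fl hΩ hs.1.le hs.2,
          add_tsub_cancel_of_le hs.2.le]
      simp only [hf]
      rw [h4, yM_flow_enter fl hΩ hy' hs.1 hs.2]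
    rw [setLIntegral_congr_fun (measurableSet_ivl _) this, setLIntegral_const,
      volume_ivl, hcan _ _ hy0]

/-- Mass balance for nonnegative data. A unit of mass with remaining lifetime `τ` contributes
`λ ∫_0^τ e^{-λs} ds` inside `Ω` and `e^{-λτ}` on `Γ₊`, and these two add up to `1`. -/
theorem balance (fl : IsFlow Φ) (hΩ : IsOpen Ω) {μ ν νp : Measure (Fin N → ℝ)} [SigmaFinite μ]
    (hmp : ∀ t, MeasurePreserving (fun x => Φ x t) μ μ)
    (hd : Disint Ω Φ μ ν) (hdp : Disint Ω (fun x s => Φ x (-s)) μ νp) {lam : ℝ} (hlam : 0 < lam)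
    {G U : (Fin N → ℝ) → ℝ≥0∞} (hG : Measurable G) (hU : Measurable U) :
    (∫⁻ z, (srcE Ω Φ lam G z + bdE Ω Φ lam U z) ∂νp)
      + ENNReal.ofReal lam * (∫⁻ x in Ω, (srcE Ω Φ lam G x + bdE Ω Φ lam U x) ∂μ)
      = (∫⁻ y, U y ∂ν) + ∫⁻ x in Ω, G x ∂μ := by
  have hτP := measurable_tauP fl hΩ
  have hc : Measurable fun x => ∫⁻ s in ivl (tauP Ω Φ x), dc lam s :=
    measurable_lintegral_ivl hτP (K := fun p => dc lam p.1) ((measurable_dc lam).comp measurable_fst)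
  have hD : Measurable fun x => dcI lam (tauP Ω Φ x) := (measurable_dcI lam).comp hτP
  rw [lintegral_add_left (measurable_srcE fl hΩ lam hG),
    lintegral_add_left (measurable_srcE fl hΩ lam hG), lintegral_srcE fl hΩ hmp lam hG,
    lintegral_bdE fl hΩ hd lam hU, lintegral_srcE_bd fl hΩ hdp lam hG,
    lintegral_bdE_bd fl hΩ hd hdp lam hU]
  have key : ∀ (ρ : Measure (Fin N → ℝ)) (H : (Fin N → ℝ) → ℝ≥0∞), Measurable H →
      (∫⁻ x, dcI lam (tauP Ω Φ x) * H x ∂ρ)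
        + ENNReal.ofReal lam * ∫⁻ x, (∫⁻ s in ivl (tauP Ω Φ x), dc lam s) * H x ∂ρ
        = ∫⁻ x, H x ∂ρ := by
    intro ρ H hH
    have hcH : Measurable fun x => (∫⁻ s in ivl (tauP Ω Φ x), dc lam s) * H x := hc.mul hH
    have hDH : Measurable fun x => dcI lam (tauP Ω Φ x) * H x := hD.mul hH
    rw [← lintegral_const_mul _ hcH, ← lintegral_add_left hDH]
    refine lintegral_congr fun x => ?_
    rw [← mul_assoc, ← add_mul, add_comm, integral_exp_ivl hlam, one_mul]
  rw [← key ν U hU, ← key (μ.restrict Ω) G hG]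
  ring

end

/-! ### Norm estimate -/

section

variable {N : ℕ} {Φ : (Fin N → ℝ) → ℝ → (Fin N → ℝ)} {Ω : Set (Fin N → ℝ)}

theorem measurable_resolv (fl : IsFlow Φ) (hΩ : IsOpen Ω) (lam : ℝ)
    {g : (Fin N → ℝ) → ℝ} (hg : Measurable g) : Measurable (resolv Ω Φ lam g) := by
  have h1 : Measurable fun p : ℝ × (Fin N → ℝ) => Real.exp (-(lam * p.1)) := by fun_prop
  exact measurable_integral_ivl (measurable_tauM fl hΩ)
    (K := fun p => Real.exp (-(lam * p.1)) * g (Φ p.2 (-p.1)))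
    (h1.mul (hg.comp (measurable_flow_neg fl)))

/-- The contribution of the incoming datum to the solution. -/
def bdR (Ω : Set (Fin N → ℝ)) (Φ : (Fin N → ℝ) → ℝ → (Fin N → ℝ)) (lam : ℝ)
    (u : (Fin N → ℝ) → ℝ) (x : Fin N → ℝ) : ℝ :=
  if tauM Ω Φ x < ⊤ then Real.exp (-(lam * (tauM Ω Φ x).toReal)) * u (yM Ω Φ x) else 0

theorem bvpSol_eq (lam : ℝ) (g u : (Fin N → ℝ) → ℝ) (x : Fin N → ℝ) :
    bvpSol Ω Φ lam g u x = resolv Ω Φ lam g x + bdR Ω Φ lam u x := rfl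

theorem measurable_bdR (fl : IsFlow Φ) (hΩ : IsOpen Ω) (lam : ℝ)
    {u : (Fin N → ℝ) → ℝ} (hu : Measurable u) : Measurable (bdR Ω Φ lam u) := by
  have hτ := measurable_tauM fl hΩ
  have h1 := hτ.ennreal_toReal
  have h2 : Measurable fun x => Real.exp (-(lam * (tauM Ω Φ x).toReal)) := by fun_prop
  exact Measurable.ite (measurableSet_lt hτ measurable_const)
    (h2.mul (hu.comp (measurable_yM fl hΩ))) measurable_const

theorem measurable_bvpSol (fl : IsFlow Φ) (hΩ : IsOpen Ω) (lam : ℝ)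
    {g u : (Fin N → ℝ) → ℝ} (hg : Measurable g) (hu : Measurable u) :
    Measurable (bvpSol Ω Φ lam g u) :=
  (measurable_resolv fl hΩ lam hg).add (measurable_bdR fl hΩ lam hu)

theorem enorm_exp_mul (a b : ℝ) : ‖Real.exp a * b‖ₑ = ENNReal.ofReal (Real.exp a) * ‖b‖ₑ := by
  rw [enorm_mul, Real.enorm_of_nonneg (Real.exp_pos a).le]

theorem enorm_bdR (lam : ℝ) (u : (Fin N → ℝ) → ℝ) (x : Fin N → ℝ) :
    ‖bdR Ω Φ lam u x‖ₑ = bdE Ω Φ lam (fun y => ‖u y‖ₑ) x := by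
  unfold bdR bdE dcI dc
  split_ifs
  · rw [enorm_exp_mul]
  · simp

theorem enorm_resolv_le (lam : ℝ) (g : (Fin N → ℝ) → ℝ) (x : Fin N → ℝ) :
    ‖resolv Ω Φ lam g x‖ₑ ≤ srcE Ω Φ lam (fun y => ‖g y‖ₑ) x := by
  refine (enorm_integral_le_lintegral_enorm _).trans (le_of_eq ?_)
  exact lintegral_congr fun s => enorm_exp_mul _ _

theorem enorm_bvpSol_le (lam : ℝ) (g u : (Fin N → ℝ) → ℝ) (x : Fin N → ℝ) :
    ‖bvpSol Ω Φ lam g u x‖ₑ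
      ≤ srcE Ω Φ lam (fun y => ‖g y‖ₑ) x + bdE Ω Φ lam (fun y => ‖u y‖ₑ) x := by
  rw [bvpSol_eq, ← enorm_bdR]
  exact (enorm_add_le _ _).trans (add_le_add_left (enorm_resolv_le _ _ _) _)

theorem enorm_bvpSol_eq (fl : IsFlow Φ) (hΩ : IsOpen Ω) {lam : ℝ} {g u : (Fin N → ℝ) → ℝ}
    (hg : ∀ x, 0 ≤ g x) (hu : ∀ x, 0 ≤ u x) {x : Fin N → ℝ} (hx : Good Ω Φ lam g x) :
    ‖bvpSol Ω Φ lam g u x‖ₑ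
      = srcE Ω Φ lam (fun y => ‖g y‖ₑ) x + bdE Ω Φ lam (fun y => ‖u y‖ₑ) x := by
  have h1 : ∀ s, 0 ≤ Real.exp (-(lam * s)) * g (Φ x (-s)) := fun s =>
    mul_nonneg (Real.exp_pos _).le (hg _)
  have h2 : 0 ≤ bdR Ω Φ lam u x := by
    unfold bdR; split_ifs
    · exact mul_nonneg (Real.exp_pos _).le (hu _)
    · exact le_rfl
  have h3 : 0 ≤ resolv Ω Φ lam g x := integral_nonneg h1
  rw [bvpSol_eq, ← enorm_bdR, Real.enorm_of_nonneg (add_nonneg h3 h2), ENNReal.ofReal_add h3 h2,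
    Real.enorm_of_nonneg h2]
  congr 1
  have h4 := ofReal_integral_eq_lintegral_ofReal (hx.integrableOn fl hΩ) (ae_of_all _ h1)
  refine h4.trans ?_
  refine lintegral_congr fun s => ?_
  change ENNReal.ofReal (Real.exp (-(lam * s)) * g (Φ x (-s))) = dc lam s * ‖g (Φ x (-s))‖ₑ
  rw [ENNReal.ofReal_mul (Real.exp_pos _).le, Real.enorm_of_nonneg (hg _), dc]

/-- Integrability of the solution and of its outgoing trace, with the norm estimate. -/
theorem bvpSol_norm (fl : IsFlow Φ) (hΩ : IsOpen Ω) {μ ν νp : Measure (Fin N → ℝ)} [SigmaFinite μ]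
    (hmp : ∀ t, MeasurePreserving (fun x => Φ x t) μ μ)
    (hd : Disint Ω Φ μ ν) (hdp : Disint Ω (fun x s => Φ x (-s)) μ νp) {lam : ℝ} (hlam : 0 < lam)
    {g u : (Fin N → ℝ) → ℝ} (hg : Measurable g) (hu : Measurable u)
    (hgi : Integrable g (μ.restrict Ω)) (hui : Integrable u ν) :
    Integrable (bvpSol Ω Φ lam g u) (μ.restrict Ω) ∧ Integrable (bvpSol Ω Φ lam g u) νp ∧
    (∫ z, |bvpSol Ω Φ lam g u z| ∂νp) + lam * ∫ x in Ω, |bvpSol Ω Φ lam g u x| ∂μ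
      ≤ (∫ y, |u y| ∂ν) + ∫ x in Ω, |g x| ∂μ ∧
    ((∀ x, 0 ≤ g x) → (∀ y, 0 ≤ u y) →
      (∫ z, |bvpSol Ω Φ lam g u z| ∂νp) + lam * ∫ x in Ω, |bvpSol Ω Φ lam g u x| ∂μ
      = (∫ y, |u y| ∂ν) + ∫ x in Ω, |g x| ∂μ) := by
  set f := bvpSol Ω Φ lam g u with hf
  have hfm : Measurable f := measurable_bvpSol fl hΩ lam hg hu
  have hbal := balance fl hΩ hmp hd hdp hlam hg.enorm hu.enorm
  set A := fun x => srcE Ω Φ lam (fun y => ‖g y‖ₑ) x + bdE Ω Φ lam (fun y => ‖u y‖ₑ) x with hA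
  have hle : ∀ x, ‖f x‖ₑ ≤ A x := fun x => enorm_bvpSol_le lam g u x
  have hfin : (∫⁻ y, ‖u y‖ₑ ∂ν) + ∫⁻ x in Ω, ‖g x‖ₑ ∂μ < ⊤ :=
    ENNReal.add_lt_top.2 ⟨hui.2, hgi.2⟩
  have hin : (∫⁻ z, ‖f z‖ₑ ∂νp) + ENNReal.ofReal lam * ∫⁻ x in Ω, ‖f x‖ₑ ∂μ
      ≤ (∫⁻ y, ‖u y‖ₑ ∂ν) + ∫⁻ x in Ω, ‖g x‖ₑ ∂μ := by
    rw [← hbal]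
    gcongr
    · exact hle _
    · exact hle _
  have hl0 : ENNReal.ofReal lam ≠ 0 := by simpa using hlam
  have h1 : ∫⁻ z, ‖f z‖ₑ ∂νp < ⊤ := (le_self_add.trans hin).trans_lt hfin
  have h2 : ∫⁻ x in Ω, ‖f x‖ₑ ∂μ < ⊤ := by
    have := (le_add_self.trans hin).trans_lt hfin
    exact ENNReal.lt_top_of_mul_ne_top_right this.ne hl0
  have hI1 : Integrable f νp := ⟨hfm.aestronglyMeasurable, h1⟩
  have hI2 : Integrable f (μ.restrict Ω) := ⟨hfm.aestronglyMeasurable, h2⟩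
  have hconv : ∀ {ρ : Measure (Fin N → ℝ)} {k : (Fin N → ℝ) → ℝ}, Integrable k ρ →
      ∫ x, |k x| ∂ρ = (∫⁻ x, ‖k x‖ₑ ∂ρ).toReal := fun {ρ k} hk => by
    rw [← integral_norm_eq_lintegral_enorm hk.1]; rfl
  have hL : (∫ z, |f z| ∂νp) + lam * ∫ x in Ω, |f x| ∂μ
      = ((∫⁻ z, ‖f z‖ₑ ∂νp) + ENNReal.ofReal lam * ∫⁻ x in Ω, ‖f x‖ₑ ∂μ).toReal := by
    rw [hconv hI1, hconv hI2, ENNReal.toReal_add h1.ne (ENNReal.mul_ne_top (by simp) h2.ne),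
      ENNReal.toReal_mul, ENNReal.toReal_ofReal hlam.le]
  have hR : (∫ y, |u y| ∂ν) + ∫ x in Ω, |g x| ∂μ
      = ((∫⁻ y, ‖u y‖ₑ ∂ν) + ∫⁻ x in Ω, ‖g x‖ₑ ∂μ).toReal := by
    rw [hconv hui, hconv hgi, ENNReal.toReal_add hui.2.ne hgi.2.ne]
  refine ⟨hI2, hI1, ?_, fun hg0 hu0 => ?_⟩
  · rw [hL, hR]; exact ENNReal.toReal_mono hfin.ne hin
  · rw [hL, hR, ← hbal]
    congr 2
    · refine lintegral_congr_ae ?_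
      filter_upwards [Disint.ae_good fl.rev hdp (mp_rev hmp) hΩ hlam hg hgi] with z hz
      exact enorm_bvpSol_eq fl hΩ hg0 hu0 hz.of_rev
    · congr 1
      refine lintegral_congr_ae ?_
      filter_upwards [ae_restrict_of_ae (ae_good fl hmp hΩ hlam hgi)] with z hz
      exact enorm_bvpSol_eq fl hΩ hg0 hu0 hz

end

/-! ### Weak formulation -/

section

variable {N : ℕ} {Φ : (Fin N → ℝ) → ℝ → (Fin N → ℝ)} {Ω : Set (Fin N → ℝ)}

/-- Discounted integral of `χ` along the forward characteristic from `z`; this is the adjoint of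
the operators `resolv` and `bdR`. -/
def fwdInt (Ω : Set (Fin N → ℝ)) (Φ : (Fin N → ℝ) → ℝ → (Fin N → ℝ)) (lam : ℝ)
    (χ : (Fin N → ℝ) → ℝ) (z : Fin N → ℝ) : ℝ :=
  ∫ s in ivl (tauP Ω Φ z), Real.exp (-(lam * s)) * χ (Φ z s)

theorem IsTestFun.hasDerivAt_along (fl : IsFlow Φ) {ψ Dψ : (Fin N → ℝ) → ℝ}
    (h : IsTestFun Ω Φ ψ Dψ) {z : Fin N → ℝ} {t : ℝ} (hz : Φ z t ∈ Ω) :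
    HasDerivAt (fun s => ψ (Φ z s)) (Dψ (Φ z t)) t := by
  have h1 := h.hasDeriv _ hz
  rw [← sub_self t] at h1
  have h2 := h1.comp_sub_const t t
  simpa [fl.add] using h2

theorem IsTestFun.eventually_zero (fl : IsFlow Φ) {ψ Dψ : (Fin N → ℝ) → ℝ}
    (h : IsTestFun Ω Φ ψ Dψ) {z : Fin N → ℝ} {t : ℝ} (hz : Φ z t ∉ Ω) :
    ∀ᶠ s in 𝓝 t, ψ (Φ z s) = 0 := by
  obtain ⟨K, hK, hKΩ, h0⟩ := h.compact_support
  have h1 : Kᶜ ∈ 𝓝 (Φ z t) := hK.isClosed.isOpen_compl.mem_nhds fun hc => hz (hKΩ hc)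
  filter_upwards [(fl.cont_time z).continuousAt h1] with s hs
  exact h0 _ hs

theorem integrableOn_exp_mul {lam : ℝ} (hlam : 0 < lam) {k : ℝ → ℝ} (hk : Measurable k) {C : ℝ}
    (hC : ∀ s, |k s| ≤ C) : IntegrableOn (fun s => Real.exp (-(lam * s)) * k s) (Ioi 0) := by
  have h1 : IntegrableOn (fun s : ℝ => Real.exp (-(lam * s))) (Ioi 0) := by
    simpa only [neg_mul] using exp_neg_integrableOn_Ioi 0 hlam
  exact h1.mul_bdd hk.aestronglyMeasurable (ae_of_all _ hC)

/-- The fundamental theorem of calculus along a characteristic: the test function vanishes near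
the exit point and, when `z` lies on the boundary, near `z` itself. -/
theorem fwdInt_deriv (fl : IsFlow Φ) (hΩ : IsOpen Ω) {lam : ℝ} (hlam : 0 < lam)
    {ψ Dψ : (Fin N → ℝ) → ℝ} (h : IsTestFun Ω Φ ψ Dψ) {z : Fin N → ℝ} (hz : 0 < tauP Ω Φ z) :
    fwdInt Ω Φ lam Dψ z = lam * fwdInt Ω Φ lam ψ z - ψ z := by
  obtain ⟨C, hC⟩ := h.bounded
  obtain ⟨D, hD⟩ := h.boundedD
  set T := ivl (tauP Ω Φ z)
  have hT : MeasurableSet T := measurableSet_ivl _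
  have hct := (fl.cont_time z).measurable
  have hψm := h.measurable.comp hct
  have hDm := h.measurableD.comp hct
  have i1 := (integrableOn_exp_mul hlam hψm (fun s => hC _)).mono_set
    (fun s hs => hs.1 : T ⊆ Ioi 0)
  have i2 := (integrableOn_exp_mul hlam hDm (fun s => hD _)).mono_set
    (fun s hs => hs.1 : T ⊆ Ioi 0)
  -- the discounted test function along the curve, extended by zero past the exit time; it is
  -- differentiable at the exit time because the support of the test function is compact in `Ω`
  set q : ℝ → ℝ := fun t =>
    if ENNReal.ofReal t < tauP Ω Φ z then Real.exp (-(lam * t)) * ψ (Φ z t) else 0 with hq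
  set q' : ℝ → ℝ := T.indicator fun t =>
    Real.exp (-(lam * t)) * Dψ (Φ z t) - lam * (Real.exp (-(lam * t)) * ψ (Φ z t)) with hq'
  have hlt : ∀ t, ENNReal.ofReal t < tauP Ω Φ z →
      ∀ᶠ s in 𝓝 t, q s = Real.exp (-(lam * s)) * ψ (Φ z s) := fun t ht => by
    filter_upwards [ENNReal.continuous_ofReal.continuousAt.eventually_lt_const ht] with s hs
    exact if_pos hs
  have hderiv : ∀ t ∈ Ioi (0:ℝ), HasDerivAt q (q' t) t := by
    intro t ht
    by_cases htT : ENNReal.ofReal t < tauP Ω Φ z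
    · rw [hq', indicator_of_mem (show t ∈ T from ⟨ht, htT⟩)]
      have hm : Φ z t ∈ Ω := flow_mem_of_lt_tauP fl hΩ ht htT
      have he : HasDerivAt (fun s : ℝ => Real.exp (-(lam * s))) (-lam * Real.exp (-(lam * t))) t := by
        have h0 : HasDerivAt (fun s : ℝ => -(lam * s)) (-lam) t := by
          exact ((hasDerivAt_id t).const_mul lam).neg.congr_deriv (by rw [mul_one])
        exact h0.exp.congr_deriv (mul_comm _ _)
      have h1 := he.mul (h.hasDerivAt_along fl hm)
      refine (h1.congr_of_eventuallyEq (hlt t htT)).congr_deriv ?_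
      ring
    · rw [hq', indicator_of_notMem (fun hc => htT hc.2)]
      refine (hasDerivAt_const t (0:ℝ)).congr_of_eventuallyEq ?_
      have hfin : tauP Ω Φ z < ⊤ := (not_lt.1 htT).trans_lt ENNReal.ofReal_lt_top
      rcases (not_lt.1 htT).eq_or_lt with he | he
      · have hex := exit_notMem fl hΩ hz hfin
        rw [he, ENNReal.toReal_ofReal (mem_Ioi.1 ht).le] at hex
        filter_upwards [h.eventually_zero fl hex] with s hs
        simp [hq, hs]
      · filter_upwards [ENNReal.continuous_ofReal.continuousAt.eventually_const_lt he] with s hs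
        exact if_neg hs.not_gt
  have hcont0 : ContinuousAt (fun s => ψ (Φ z s)) 0 := by
    by_cases hzΩ : z ∈ Ω
    · exact (h.hasDeriv z hzΩ).continuousAt
    · have h1 : ∀ᶠ s in 𝓝 (0:ℝ), ψ (Φ z s) = 0 := h.eventually_zero fl (by rwa [fl.zero])
      exact continuousAt_const.congr (h1.mono fun s hs => hs.symm)
  have hcont : ContinuousWithinAt q (Ici 0) 0 := by
    have h1 : ContinuousAt (fun s : ℝ => Real.exp (-(lam * s)) * ψ (Φ z s)) 0 :=
      (by fun_prop : Continuous fun s : ℝ => Real.exp (-(lam * s))).continuousAt.mul hcont0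
    refine (h1.congr ?_).continuousWithinAt
    filter_upwards [hlt 0 (by simpa using hz)] with s hs using hs.symm
  have hint : IntegrableOn q' (Ioi 0) :=
    ((integrable_indicator_iff hT).2 (i2.sub (i1.const_mul lam))).integrableOn
  have hlim : Tendsto q atTop (𝓝 0) := by
    have h1 : Tendsto (fun t : ℝ => Real.exp (-(lam * t)) * C) atTop (𝓝 0) := by
      have : Tendsto (fun t : ℝ => Real.exp (-(lam * t))) atTop (𝓝 0) :=
        Real.tendsto_exp_neg_atTop_nhds_zero.comp (tendsto_id.const_mul_atTop hlam)
      simpa using this.mul_const C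
    refine squeeze_zero_norm (fun t => ?_) h1
    have hC0 : 0 ≤ C := (abs_nonneg _).trans (hC z)
    simp only [hq]
    split_ifs
    · rw [norm_mul, Real.norm_of_nonneg (Real.exp_pos _).le]
      exact mul_le_mul_of_nonneg_left (hC _) (Real.exp_pos _).le
    · rw [norm_zero]; exact mul_nonneg (Real.exp_pos _).le hC0
  have hftc := integral_Ioi_of_hasDerivAt_of_tendsto hcont hderiv hint hlim
  have hq0 : q 0 = ψ z := by simp [hq, hz, fl.zero]
  have hTs : Ioi 0 ∩ T = T := inter_eq_right.2 fun s hs => hs.1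
  simp only [Function.comp_apply] at i1 i2
  rw [hq', setIntegral_indicator hT, hTs,
    integral_sub i2 (i1.const_mul lam), integral_const_mul, hq0] at hftc
  simp only [fwdInt]
  linarith

/-- Duality between `resolv` and the forward discounted integral. -/
theorem integral_resolv_mul (fl : IsFlow Φ) (hΩ : IsOpen Ω) {μ : Measure (Fin N → ℝ)}
    [SigmaFinite μ] (hmp : ∀ t, MeasurePreserving (fun x => Φ x t) μ μ) {lam : ℝ} (hlam : 0 < lam)
    {g χ : (Fin N → ℝ) → ℝ} (hgm : Measurable g) (hg : Integrable g (μ.restrict Ω))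
    (hχ : Measurable χ) {C : ℝ} (hC : ∀ x, |χ x| ≤ C) :
    ∫ x in Ω, resolv Ω Φ lam g x * χ x ∂μ = ∫ z in Ω, g z * fwdInt Ω Φ lam χ z ∂μ ∧
    Integrable (fun z => g z * fwdInt Ω Φ lam χ z) (μ.restrict Ω) ∧
    Integrable (fun x => resolv Ω Φ lam g x * χ x) (μ.restrict Ω) := by
  have hT := mp_skew fl.rev (mp_rev hmp)
  set Sm := {p : ℝ × (Fin N → ℝ) | p.2 ∈ Ω ∧ p.1 ∈ ivl (tauM Ω Φ p.2)} with hSm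
  set Sp := {p : ℝ × (Fin N → ℝ) | p.2 ∈ Ω ∧ p.1 ∈ ivl (tauP Ω Φ p.2)} with hSp
  have hSpm : MeasurableSet Sp :=
    (measurable_snd hΩ.measurableSet).inter (measurableSet_ivl_prod (measurable_tauP fl hΩ))
  set k : ℝ × (Fin N → ℝ) → ℝ := fun p => Real.exp (-(lam * p.1)) * g p.2 * χ (Φ p.2 p.1) with hk
  set h : ℝ × (Fin N → ℝ) → ℝ := fun p => Real.exp (-(lam * p.1)) * g (Φ p.2 (-p.1)) * χ p.2 with hh
  have hexp : Measurable fun p : ℝ × (Fin N → ℝ) => Real.exp (-(lam * p.1)) := by fun_prop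
  have hkm : Measurable (Sp.indicator k) :=
    (((hexp.mul (hgm.comp measurable_snd))).mul (hχ.comp fl.cont.measurable)).indicator hSpm
  have hkI : Integrable (Sp.indicator k) ((volume : Measure ℝ).prod μ) := by
    have h0 : Integrable (Ω.indicator g) μ := (integrable_indicator_iff hΩ.measurableSet).2 hg
    have h1 := ((integrable_exp_abs hlam).mul_prod h0).mul_const C
    refine h1.mono hkm.aestronglyMeasurable (ae_of_all _ fun p => ?_)
    by_cases hp : p ∈ Sp
    · have hC0 : 0 ≤ C := (abs_nonneg _).trans (hC p.2)
      rw [indicator_of_mem hp, indicator_of_mem hp.1, abs_of_pos hp.2.1, norm_mul, norm_mul _ C,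
        Real.norm_of_nonneg hC0]
      exact mul_le_mul_of_nonneg_left (hC _) (norm_nonneg _)
    · rw [indicator_of_notMem hp, norm_zero]; exact norm_nonneg _
  have hcomp : ∀ p : ℝ × (Fin N → ℝ), Sm.indicator h p = Sp.indicator k (p.1, Φ p.2 (-p.1)) := by
    intro p
    have hiff := mem_swap_iff fl hΩ p.1 p.2
    by_cases hp : p ∈ Sm
    · have hp' : (p.1, Φ p.2 (-p.1)) ∈ Sp := hiff.1 hp
      rw [indicator_of_mem hp, indicator_of_mem hp']
      simp [hh, hk, fl.add, fl.zero]
    · have hp' : (p.1, Φ p.2 (-p.1)) ∉ Sp := fun hc => hp (hiff.2 hc)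
      rw [indicator_of_notMem hp, indicator_of_notMem hp']
  have hhI : Integrable (Sm.indicator h) ((volume : Measure ℝ).prod μ) := by
    have := hT.integrable_comp_of_integrable hkI
    exact this.congr (ae_of_all _ fun p => (hcomp p).symm)
  have heq : ∫ p, Sm.indicator h p ∂(volume : Measure ℝ).prod μ
      = ∫ p, Sp.indicator k p ∂(volume : Measure ℝ).prod μ := by
    conv_rhs => rw [← hT.map_eq]
    rw [integral_map hT.measurable.aemeasurable hkm.aestronglyMeasurable]
    exact integral_congr_ae (ae_of_all _ hcomp)
  have hsm : ∀ x, ∫ s, Sm.indicator h (s, x) = Ω.indicator (fun x => resolv Ω Φ lam g x * χ x) x := by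
    intro x
    by_cases hx : x ∈ Ω
    · rw [indicator_of_mem hx, resolv, curveInt, ← integral_mul_const]
      change _ = ∫ s in ivl (tauM Ω Φ x), _
      rw [← integral_indicator (measurableSet_ivl _)]
      congr 1; ext s
      by_cases hs : s ∈ ivl (tauM Ω Φ x)
      · rw [indicator_of_mem hs, indicator_of_mem (show (s, x) ∈ Sm from ⟨hx, hs⟩)]
      · rw [indicator_of_notMem hs, indicator_of_notMem (fun hc => hs hc.2)]
    · rw [indicator_of_notMem hx, ← integral_zero ℝ ℝ]
      congr 1; ext s
      exact indicator_of_notMem (fun hc => hx hc.1) _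
  have hsp : ∀ x, ∫ s, Sp.indicator k (s, x)
      = Ω.indicator (fun x => g x * fwdInt Ω Φ lam χ x) x := by
    intro x
    by_cases hx : x ∈ Ω
    · rw [indicator_of_mem hx, fwdInt, ← integral_const_mul,
        ← integral_indicator (measurableSet_ivl _)]
      congr 1; ext s
      by_cases hs : s ∈ ivl (tauP Ω Φ x)
      · rw [indicator_of_mem hs, indicator_of_mem (show (s, x) ∈ Sp from ⟨hx, hs⟩)]
        simp only [hk]; ring
      · rw [indicator_of_notMem hs, indicator_of_notMem (fun hc => hs hc.2)]
    · rw [indicator_of_notMem hx, ← integral_zero ℝ ℝ]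
      congr 1; ext s
      exact indicator_of_notMem (fun hc => hx hc.1) _
  refine ⟨?_, ?_, ?_⟩
  · rw [integral_prod_symm _ hhI, integral_prod_symm _ hkI] at heq
    simp only [hsm, hsp] at heq
    rwa [integral_indicator hΩ.measurableSet, integral_indicator hΩ.measurableSet] at heq
  · have := hkI.integral_prod_right
    simp only [hsp] at this
    exact (integrable_indicator_iff hΩ.measurableSet).1 this
  · have := hhI.integral_prod_right
    simp only [hsm] at this
    exact (integrable_indicator_iff hΩ.measurableSet).1 this

/-- Integration over `Ω₋` along the characteristics, for functions of either sign. -/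
theorem Disint.integral_eq {μ ν : Measure (Fin N → ℝ)} (hd : Disint Ω Φ μ ν) (fl : IsFlow Φ)
    (hΩ : IsOpen Ω) {f : (Fin N → ℝ) → ℝ} (hf : Measurable f)
    (hfi : Integrable f (μ.restrict (OmM Ω Φ))) :
    Integrable (fun y => ∫ s in ivl (tauP Ω Φ y), f (Φ y s)) ν ∧
    ∫ x in OmM Ω Φ, f x ∂μ = ∫ y, (∫ s in ivl (tauP Ω Φ y), f (Φ y s)) ∂ν := by
  have := hd.sfin
  set S := {p : ℝ × (Fin N → ℝ) | p.1 ∈ ivl (tauP Ω Φ p.2)} with hS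
  have hSm : MeasurableSet S := measurableSet_ivl_prod (measurable_tauP fl hΩ)
  set ρ := ((volume : Measure ℝ).prod ν).restrict S with hρ
  have hcm := fl.cont.measurable
  have hmap : ρ.map (fun p => Φ p.2 p.1) = μ.restrict (OmM Ω Φ) := by
    refine Measure.ext_of_lintegral _ fun k hk => ?_
    rw [lintegral_map hk hcm, hd.eq k hk, hρ, ← lintegral_indicator hSm,
      lintegral_prod_symm' (S.indicator fun p => k (Φ p.2 p.1)) ((hk.comp hcm).indicator hSm)]
    refine lintegral_congr fun y => ?_
    rw [← lintegral_indicator (measurableSet_ivl _)]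
    rfl
  have hI : Integrable (fun p => f (Φ p.2 p.1)) ρ := by
    rw [← hmap] at hfi
    exact (integrable_map_measure hf.aestronglyMeasurable hcm.aemeasurable).1 hfi
  have hI' := (integrable_indicator_iff hSm).2 hI
  have hy : ∀ y, ∫ s, S.indicator (fun p => f (Φ p.2 p.1)) (s, y)
      = ∫ s in ivl (tauP Ω Φ y), f (Φ y s) := fun y => by
    rw [← integral_indicator (measurableSet_ivl _)]; rfl
  refine ⟨?_, ?_⟩
  · have := hI'.integral_prod_right
    simpa only [hy] using this
  · rw [← hmap, integral_map hcm.aemeasurable hf.aestronglyMeasurable, hρ,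
      ← integral_indicator hSm, integral_prod_symm _ hI']
    simp only [hy]

/-- Duality between `bdR` and the forward discounted integral. -/
theorem integral_bdR_mul (fl : IsFlow Φ) (hΩ : IsOpen Ω) {μ ν : Measure (Fin N → ℝ)}
    (hd : Disint Ω Φ μ ν) {lam : ℝ}
    {u χ : (Fin N → ℝ) → ℝ} (hu : Measurable u)
    (hχ : Measurable χ) (hi : Integrable (fun x => bdR Ω Φ lam u x * χ x) (μ.restrict Ω)) :
    ∫ x in Ω, bdR Ω Φ lam u x * χ x ∂μ = ∫ y, u y * fwdInt Ω Φ lam χ y ∂ν := by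
  have hOm := measurableSet_OmM fl hΩ
  have hsub : OmM Ω Φ ⊆ Ω := fun x hx => hx.1
  have h0 : ∫ x in Ω, bdR Ω Φ lam u x * χ x ∂μ = ∫ x in OmM Ω Φ, bdR Ω Φ lam u x * χ x ∂μ := by
    refine setIntegral_eq_of_subset_of_forall_sdiff_eq_zero hΩ.measurableSet hsub fun x hx => ?_
    have : ¬ tauM Ω Φ x < ⊤ := fun hc => hx.2 ⟨hx.1, hc⟩
    simp [bdR, this]
  rw [h0, (hd.integral_eq (f := fun x => bdR Ω Φ lam u x * χ x) fl hΩ ((measurable_bdR fl hΩ lam hu).mul hχ)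
    (hi.mono_measure (Measure.restrict_mono_set _ hsub))).2]
  refine integral_congr_ae ?_
  filter_upwards [hd.supp] with y hy
  rw [fwdInt, ← integral_const_mul]
  refine setIntegral_congr_fun (measurableSet_ivl _) fun s hs => ?_
  have hy' := notMem_of_mem_GammaM fl hΩ hy
  simp only [bdR]
  rw [yM_flow_enter fl hΩ hy' hs.1 hs.2, tauM_flow_enter fl hΩ hy' hs.1 hs.2,
    if_pos ENNReal.ofReal_lt_top, ENNReal.toReal_ofReal hs.1.le]
  ring

/-- The weak form of `λ f - T_max f = g`: both dualities reduce it to `fwdInt_deriv`. -/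
theorem bvpSol_weak (fl : IsFlow Φ) (hΩ : IsOpen Ω) {μ ν : Measure (Fin N → ℝ)} [SigmaFinite μ]
    (hmp : ∀ t, MeasurePreserving (fun x => Φ x t) μ μ)
    (hd : Disint Ω Φ μ ν) {lam : ℝ} (hlam : 0 < lam)
    {g u : (Fin N → ℝ) → ℝ} (hg : Measurable g) (hu : Measurable u)
    (hgi : Integrable g (μ.restrict Ω))
    (hfi : Integrable (bvpSol Ω Φ lam g u) (μ.restrict Ω))
    {ψ Dψ : (Fin N → ℝ) → ℝ} (h : IsTestFun Ω Φ ψ Dψ) :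
    ∫ x in Ω, (lam * bvpSol Ω Φ lam g u x - g x) * ψ x ∂μ
      = ∫ x in Ω, bvpSol Ω Φ lam g u x * Dψ x ∂μ := by
  obtain ⟨C, hC⟩ := h.bounded
  obtain ⟨D, hD⟩ := h.boundedD
  have bddmul : ∀ {k χ : (Fin N → ℝ) → ℝ} {c : ℝ}, Integrable k (μ.restrict Ω) → Measurable χ →
      (∀ x, |χ x| ≤ c) → Integrable (fun x => k x * χ x) (μ.restrict Ω) :=
    fun hk hχ hc => hk.mul_bdd hχ.aestronglyMeasurable (ae_of_all _ hc)
  obtain ⟨a1, b1, c1⟩ := integral_resolv_mul fl hΩ hmp hlam hg hgi h.measurable hC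
  obtain ⟨a2, b2, c2⟩ := integral_resolv_mul fl hΩ hmp hlam hg hgi h.measurableD hD
  have hbi : ∀ {χ : (Fin N → ℝ) → ℝ} {c : ℝ}, Measurable χ → (∀ x, |χ x| ≤ c) →
      Integrable (fun x => bdR Ω Φ lam u x * χ x) (μ.restrict Ω) := fun {χ c} hχ hc => by
    have h1 := (bddmul hfi hχ hc).sub
      (integral_resolv_mul fl hΩ hmp hlam hg hgi hχ hc).2.2
    refine h1.congr (ae_of_all _ fun x => ?_)
    simp only [Pi.sub_apply, bvpSol_eq]
    ring
  have e1 := hbi h.measurable hC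
  have e2 := hbi h.measurableD hD
  have d1 := integral_bdR_mul fl hΩ hd hu h.measurable e1
  have d2 := integral_bdR_mul fl hΩ hd hu h.measurableD e2
  have k1 : ∫ z in Ω, g z * fwdInt Ω Φ lam Dψ z ∂μ
      = lam * (∫ z in Ω, g z * fwdInt Ω Φ lam ψ z ∂μ) - ∫ z in Ω, g z * ψ z ∂μ := by
    rw [← integral_const_mul, ← integral_sub (b1.const_mul lam) (bddmul hgi h.measurable hC)]
    refine setIntegral_congr_fun hΩ.measurableSet fun z hz => ?_
    rw [fwdInt_deriv fl hΩ hlam h (tauP_pos fl hΩ hz)]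
    ring
  have k2 : ∫ y, u y * fwdInt Ω Φ lam Dψ y ∂ν = lam * ∫ y, u y * fwdInt Ω Φ lam ψ y ∂ν := by
    obtain ⟨K, hK, hKΩ, h0⟩ := h.compact_support
    rw [← integral_const_mul]
    refine integral_congr_ae ?_
    filter_upwards [hd.supp] with y hy
    have : ψ y = 0 := h0 y fun hc => notMem_of_mem_GammaM fl hΩ hy (hKΩ hc)
    rw [fwdInt_deriv fl hΩ hlam h (tauP_pos_of_mem_GammaM fl hΩ hy), this]
    ring
  have L : ∫ x in Ω, (lam * bvpSol Ω Φ lam g u x - g x) * ψ x ∂μ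
      = lam * ((∫ x in Ω, resolv Ω Φ lam g x * ψ x ∂μ) + ∫ x in Ω, bdR Ω Φ lam u x * ψ x ∂μ)
        - ∫ x in Ω, g x * ψ x ∂μ := by
    have hs := integral_sub ((c1.add e1).const_mul lam) (bddmul hgi h.measurable hC)
    rw [integral_const_mul] at hs
    rw [← integral_add c1 e1]
    refine Eq.trans ?_ hs
    congr 1; ext x
    simp only [bvpSol_eq, Pi.add_apply]; ring
  have R : ∫ x in Ω, bvpSol Ω Φ lam g u x * Dψ x ∂μ
      = (∫ x in Ω, resolv Ω Φ lam g x * Dψ x ∂μ) + ∫ x in Ω, bdR Ω Φ lam u x * Dψ x ∂μ := by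
    rw [← integral_add c2 e2]
    congr 1; ext x
    simp only [bvpSol_eq]; ring
  rw [L, R, a1, a2, d1, d2, k1, k2]
  ring

end

/-! ### Homogeneous solutions -/

section

variable {N : ℕ} {Φ : (Fin N → ℝ) → ℝ → (Fin N → ℝ)} {Ω : Set (Fin N → ℝ)}

theorem Good.intervalIntegrable_flow {lam : ℝ} {h : (Fin N → ℝ) → ℝ} {x : Fin N → ℝ}
    (hx : Good Ω Φ lam h x) {a b : ℝ} (hm : ∀ s ∈ uIcc a b, Φ x s ∈ Ω) :
    IntervalIntegrable (fun s => h (Φ x s)) volume a b := by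
  have h1 : IntervalIntegrable (fun s : ℝ => Real.exp (-(lam * |s|)) * Ω.indicator h (Φ x s))
      volume a b := Integrable.intervalIntegrable hx
  have h2 : ContinuousOn (fun s : ℝ => Real.exp (lam * |s|)) (uIcc a b) := by fun_prop
  refine (h1.continuousOn_mul h2).congr fun s hs => ?_
  rw [indicator_of_mem (hm s (uIoc_subset_uIcc hs)), ← mul_assoc, ← Real.exp_add]
  simp

/-- A homogeneous solution grows exponentially backwards along almost every characteristic. -/
theorem homog_growth (fl : IsFlow Φ) (hΩ : IsOpen Ω) {μ : Measure (Fin N → ℝ)} [SigmaFinite μ]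
    (hmp : ∀ t, MeasurePreserving (fun x => Φ x t) μ μ) {lam : ℝ} (hlam : 0 < lam)
    {v h : (Fin N → ℝ) → ℝ} (hh : Integrable h (μ.restrict Ω))
    (hv : h =ᵐ[μ.restrict Ω] fun x => lam * v x)
    (hode : ∀ᵐ x ∂μ.restrict Ω, ∀ t₁ t₂ : ℝ, t₁ ≤ t₂ →
      ENNReal.ofReal (-t₁) < tauM Ω Φ x → ENNReal.ofReal t₂ < tauP Ω Φ x →
      v (Φ x t₁) - v (Φ x t₂) = ∫ s in t₁..t₂, h (Φ x s)) :
    ∀ᵐ x ∂μ.restrict Ω, ∀ t : ℝ, 0 ≤ t → ENNReal.ofReal t < tauM Ω Φ x →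
      v (Φ x (-t)) = Real.exp (lam * t) * v x := by
  filter_upwards [hode, ae_restrict_of_ae (ae_good fl hmp hΩ hlam hh),
    ae_restrict_of_ae (ae_along fl hmp hΩ hv), ae_restrict_mem hΩ.measurableSet]
    with x hx hgood hal hxΩ t ht htτ
  have hP := tauP_pos fl hΩ hxΩ
  have hmem : ∀ s ∈ Icc 0 t, Φ x (-s) ∈ Ω := fun s hs =>
    mem_of_between fl hΩ hxΩ (t₁ := -t) (t₂ := 0) (by simpa using htτ) (by simpa using hP)
      ⟨by linarith [hs.2], by linarith [hs.1]⟩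
  have hint : IntervalIntegrable (fun s => h (Φ x (-s))) volume 0 t := by
    have h1 := hgood.intervalIntegrable_flow (a := -0) (b := -t) (fun s hs => by
      rw [neg_zero, uIcc_of_ge (by linarith)] at hs
      have := hmem (-s) ⟨by linarith [hs.2], by linarith [hs.1]⟩
      simpa using this)
    have h2 := h1.comp_mul_left (c := -1)
    simpa using h2
  have hA := exp_mul_sub (A := fun s => v (Φ x (-s))) (-lam) ht hint (fun s hs => by
    have h1 := hx (-s) 0 (by linarith [hs.1])
      (by rw [neg_neg]; exact (ENNReal.ofReal_le_ofReal hs.2).trans_lt htτ) (by simpa using hP)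
    have h2 := intervalIntegral.integral_comp_neg (a := 0) (b := s) (fun r => h (Φ x r))
    rw [neg_zero] at h2 ⊢
    rw [h2]; linarith)
  have hz : ∫ s in (0:ℝ)..t, Real.exp (-lam * s) * (-lam * v (Φ x (-s)) + h (Φ x (-s))) = 0 := by
    have hal' : ∀ᵐ s : ℝ, Φ x (-s) ∈ Ω → h (Φ x (-s)) = lam * v (Φ x (-s)) :=
      (Measure.measurePreserving_neg (volume : Measure ℝ)).quasiMeasurePreserving.ae hal
    refine intervalIntegral.integral_zero_ae ?_
    filter_upwards [hal'] with s hs hst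
    rw [uIoc_of_le ht] at hst
    rw [hs (hmem s ⟨hst.1.le, hst.2⟩)]
    ring
  rw [hz] at hA
  simp only [neg_zero, fl.zero] at hA
  have h3 : Real.exp (-lam * t) * v (Φ x (-t)) = v x := by linarith
  rw [← h3, ← mul_assoc, ← Real.exp_add]
  simp

/-- A homogeneous solution with zero incoming trace vanishes. On the characteristics coming from
`Γ₋` this is the exponential growth law; on those which never leave `Ω` in the past, the growth law
contradicts integrability because the flow preserves the measure. -/
theorem homog_zero (fl : IsFlow Φ) (hΩ : IsOpen Ω) {μ : Measure (Fin N → ℝ)} [SigmaFinite μ]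
    (hmp : ∀ t, MeasurePreserving (fun x => Φ x t) μ μ) {lam : ℝ} (hlam : 0 < lam)
    {v : (Fin N → ℝ) → ℝ} (hvi : Integrable v (μ.restrict Ω))
    (hgr : ∀ᵐ x ∂μ.restrict Ω, ∀ t : ℝ, 0 ≤ t → ENNReal.ofReal t < tauM Ω Φ x →
      v (Φ x (-t)) = Real.exp (lam * t) * v x)
    (htr : ∀ᵐ x ∂μ.restrict Ω, tauM Ω Φ x < ⊤ →
      Tendsto (fun t => v (Φ (yM Ω Φ x) t)) (𝓝[>] (0 : ℝ)) (𝓝 0)) :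
    v =ᵐ[μ.restrict Ω] 0 := by
  have hτm := measurable_tauM fl hΩ
  set E : Set (Fin N → ℝ) := Ω ∩ {x | tauM Ω Φ x = ⊤} with hE
  have hEm : MeasurableSet E := hΩ.measurableSet.inter (hτm (measurableSet_singleton ⊤))
  have hT : MeasurePreserving (fun x => Φ x (-1)) μ μ := hmp (-1)
  -- the shift by time `-1` maps `E` into itself, preserves `μ` and multiplies `|v|` by `e^λ > 1`
  have hzero : ∫⁻ x in E, ‖v x‖ₑ ∂μ = 0 := by
    set k : (Fin N → ℝ) → ℝ≥0∞ := E.indicator fun x => ‖v x‖ₑ with hk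
    have hkm : AEMeasurable k μ := by
      refine (aemeasurable_indicator_iff hEm).2 ?_
      exact (hvi.1.mono_measure (Measure.restrict_mono_set _ inter_subset_left)).enorm
    have h1 : ∫⁻ x, k (Φ x (-1)) ∂μ = ∫⁻ x in E, ‖v x‖ₑ ∂μ := by
      rw [← lintegral_indicator hEm, ← hk]
      have h2 := lintegral_map' (μ := μ) (f := k) (g := fun x => Φ x (-1))
        (by rw [hT.map_eq]; exact hkm) hT.measurable.aemeasurable
      rw [← h2, hT.map_eq]
    have h2 : ENNReal.ofReal (Real.exp lam) * ∫⁻ x in E, ‖v x‖ₑ ∂μ ≤ ∫⁻ x in E, ‖v x‖ₑ ∂μ := by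
      calc ENNReal.ofReal (Real.exp lam) * ∫⁻ x in E, ‖v x‖ₑ ∂μ
          = ∫⁻ x in E, ENNReal.ofReal (Real.exp lam) * ‖v x‖ₑ ∂μ :=
            (lintegral_const_mul' _ _ ENNReal.ofReal_ne_top).symm
        _ = ∫⁻ x in E, k (Φ x (-1)) ∂μ := by
            refine lintegral_congr_ae ?_
            filter_upwards [ae_restrict_of_ae_restrict_of_subset inter_subset_left hgr,
              ae_restrict_mem hEm] with x hx hxE
            have hlt : ENNReal.ofReal 1 < tauM Ω Φ x := by
              rw [show tauM Ω Φ x = ⊤ from hxE.2]; exact ENNReal.ofReal_lt_top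
            have hmem : Φ x (-1) ∈ E := by
              refine ⟨flow_mem_of_lt_tauM fl hΩ one_pos hlt, ?_⟩
              change tauM Ω Φ (Φ x (-1)) = ⊤
              rw [tauM_flow fl hΩ zero_le_one hlt, show tauM Ω Φ x = ⊤ from hxE.2,
                ENNReal.top_sub ENNReal.ofReal_ne_top]
            rw [hk, indicator_of_mem hmem, hx 1 zero_le_one hlt, mul_one, enorm_exp_mul]
        _ ≤ ∫⁻ x, k (Φ x (-1)) ∂μ := setLIntegral_le_lintegral _ _
        _ = _ := h1
    by_contra hne
    have hfin : ∫⁻ x in E, ‖v x‖ₑ ∂μ ≠ ⊤ :=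
      ((lintegral_mono_set inter_subset_left).trans_lt hvi.2).ne
    have h3 : ENNReal.ofReal (Real.exp lam) * (∫⁻ x in E, ‖v x‖ₑ ∂μ)
        ≤ 1 * ∫⁻ x in E, ‖v x‖ₑ ∂μ := by rwa [one_mul]
    have h4 := (ENNReal.mul_le_mul_iff_left hne hfin).1 h3
    rw [← ENNReal.ofReal_one, ENNReal.ofReal_le_ofReal_iff zero_le_one] at h4
    linarith [Real.add_one_le_exp lam]
  have hE0 : ∀ᵐ x ∂μ.restrict E, v x = 0 := by
    have hm : AEMeasurable (fun x => ‖v x‖ₑ) (μ.restrict E) :=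
      (hvi.1.mono_measure (Measure.restrict_mono_set _ inter_subset_left)).enorm
    filter_upwards [(lintegral_eq_zero_iff' hm).1 hzero] with x hx
    simpa using hx
  have hE1 := (ae_restrict_iff' hEm).1 hE0
  filter_upwards [hgr, htr, ae_restrict_of_ae hE1, ae_restrict_mem hΩ.measurableSet]
    with x hx1 hx2 hx3 hxΩ
  by_cases ht : tauM Ω Φ x < ⊤
  · set τ := (tauM Ω Φ x).toReal with hτ
    have hτ0 : 0 < τ := ENNReal.toReal_pos (tauM_pos fl hΩ hxΩ).ne' ht.ne
    have h1 : Tendsto (fun t : ℝ => Real.exp (lam * (τ - t)) * v x) (𝓝[>] 0)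
        (𝓝 (Real.exp (lam * (τ - 0)) * v x)) :=
      (by fun_prop : Continuous fun t : ℝ => Real.exp (lam * (τ - t)) * v x).continuousAt.tendsto.mono_left
        nhdsWithin_le_nhds
    have h2 : (fun t : ℝ => v (Φ (yM Ω Φ x) t)) =ᶠ[𝓝[>] 0]
        fun t : ℝ => Real.exp (lam * (τ - t)) * v x := by
      filter_upwards [Ioo_mem_nhdsGT hτ0] with t htt
      rw [← hx1 (τ - t) (by linarith [htt.2]) ?_, yM, fl.add]
      · congr 2; rw [← hτ]; ring
      · rw [ENNReal.ofReal_lt_iff_lt_toReal (by linarith [htt.2]) ht.ne]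
        linarith [htt.1]
    have h3 := tendsto_nhds_unique (h1.congr' h2.symm) (hx2 ht)
    exact (mul_eq_zero.1 h3).resolve_left (Real.exp_pos _).ne'
  · exact hx3 ⟨hxΩ, by simpa using ht⟩

end

/-! ### Representatives, traces and uniqueness -/

section

variable {N : ℕ} {Φ : (Fin N → ℝ) → ℝ → (Fin N → ℝ)} {Ω : Set (Fin N → ℝ)}

theorem exists_rep {α : Type*} [MeasurableSpace α] {ρ : Measure α} {g : α → ℝ}
    (hg : Integrable g ρ) :
    ∃ g0 : α → ℝ, Measurable g0 ∧ g =ᵐ[ρ] g0 ∧ ((∀ᵐ x ∂ρ, 0 ≤ g x) → ∀ x, 0 ≤ g0 x) := by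
  have hm : Measurable (hg.1.mk g) := hg.1.stronglyMeasurable_mk.measurable
  by_cases h0 : ∀ᵐ x ∂ρ, 0 ≤ g x
  · refine ⟨fun x => |hg.1.mk g x|, hm.abs, ?_, fun _ x => abs_nonneg _⟩
    filter_upwards [h0, hg.1.ae_eq_mk] with x hx1 hx2
    rw [← hx2, abs_of_nonneg hx1]
  · exact ⟨_, hm, hg.1.ae_eq_mk, fun h => absurd h h0⟩

/-- The solution depends on the data only through their classes modulo null functions. -/
theorem bvpSol_congr (fl : IsFlow Φ) (hΩ : IsOpen Ω) {μ ν : Measure (Fin N → ℝ)} [SigmaFinite μ]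
    (hmp : ∀ t, MeasurePreserving (fun x => Φ x t) μ μ) (hd : Disint Ω Φ μ ν) (lam : ℝ)
    {g g0 u u0 : (Fin N → ℝ) → ℝ} (hg : g =ᵐ[μ.restrict Ω] g0) (hu : u =ᵐ[ν] u0) :
    bvpSol Ω Φ lam g u =ᵐ[μ.restrict Ω] bvpSol Ω Φ lam g0 u0 := by
  filter_upwards [ae_restrict_of_ae (ae_along fl hmp hΩ hg), hd.ae_yM fl hΩ hu] with x hx1 hx2
  rw [bvpSol_eq, bvpSol_eq]
  congr 1
  · have hneg : ∀ᵐ s : ℝ, Φ x (-s) ∈ Ω → g (Φ x (-s)) = g0 (Φ x (-s)) :=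
      (Measure.measurePreserving_neg (volume : Measure ℝ)).quasiMeasurePreserving.ae hx1
    refine setIntegral_congr_ae (measurableSet_ivl _) ?_
    filter_upwards [hneg] with s hs hsτ
    rw [hs (flow_mem_of_lt_tauM fl hΩ hsτ.1 hsτ.2)]
  · unfold bdR
    split_ifs with ht
    · rw [hx2 ht]
    · rfl

theorem integral_along_congr (fl : IsFlow Φ) (hΩ : IsOpen Ω) {μ : Measure (Fin N → ℝ)}
    [SigmaFinite μ] (hmp : ∀ t, MeasurePreserving (fun x => Φ x t) μ μ)
    {k k0 : (Fin N → ℝ) → ℝ} (hk : k =ᵐ[μ.restrict Ω] k0) :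
    ∀ᵐ x ∂μ.restrict Ω, ∀ t₁ t₂ : ℝ, t₁ ≤ t₂ →
      ENNReal.ofReal (-t₁) < tauM Ω Φ x → ENNReal.ofReal t₂ < tauP Ω Φ x →
      ∫ s in t₁..t₂, k (Φ x s) = ∫ s in t₁..t₂, k0 (Φ x s) := by
  filter_upwards [ae_restrict_of_ae (ae_along fl hmp hΩ hk), ae_restrict_mem hΩ.measurableSet]
    with x hx hxΩ t₁ t₂ h12 h1 h2
  refine intervalIntegral.integral_congr_ae ?_
  filter_upwards [hx] with s hs hst
  rw [uIoc_of_le h12] at hst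
  exact hs (mem_of_between fl hΩ hxΩ h1 h2 ⟨hst.1.le, hst.2⟩)

theorem tauM_top_flow (fl : IsFlow Φ) (hΩ : IsOpen Ω) {x : Fin N → ℝ} (hx : x ∈ Ω)
    (ht : tauM Ω Φ x = ⊤) {t : ℝ} (h2 : ENNReal.ofReal t < tauP Ω Φ x) :
    tauM Ω Φ (Φ x t) = ⊤ := by
  rcases le_total 0 t with h | h
  · rw [tauM_flow_add fl hΩ hx h h2, ht, top_add]
  · have := tauM_flow fl hΩ (x := x) (t := -t) (by linarith) (by rw [ht]; exact ENNReal.ofReal_lt_top)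
    rw [neg_neg, ht, ENNReal.top_sub ENNReal.ofReal_ne_top] at this
    exact this

/-- Replaces `f` by the value `c` of the entrance point on every characteristic issued from `Γ₋`.
When `μ(Ω₋) = 0` this is a representative of `f` with prescribed trace `c`. -/
def entryMod (Ω : Set (Fin N → ℝ)) (Φ : (Fin N → ℝ) → ℝ → (Fin N → ℝ))
    (c f : (Fin N → ℝ) → ℝ) (x : Fin N → ℝ) : ℝ :=
  if tauM Ω Φ x < ⊤ then c (yM Ω Φ x) else f x

theorem ae_tauM_top (hΩ : IsOpen Ω) {μ : Measure (Fin N → ℝ)}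
    (h0 : μ (OmM Ω Φ) = 0) : ∀ᵐ x ∂μ.restrict Ω, tauM Ω Φ x = ⊤ := by
  filter_upwards [ae_restrict_of_ae (measure_eq_zero_iff_ae_notMem.1 h0),
    ae_restrict_mem hΩ.measurableSet] with x hx hxΩ
  by_contra hc
  exact hx ⟨hxΩ, lt_top_iff_ne_top.2 hc⟩

theorem entryMod_of_top {c f : (Fin N → ℝ) → ℝ} {x : Fin N → ℝ} (h : tauM Ω Φ x = ⊤) :
    entryMod Ω Φ c f x = f x := by simp [entryMod, h]

theorem entryMod_tendsto (fl : IsFlow Φ) (hΩ : IsOpen Ω) (c f : (Fin N → ℝ) → ℝ) {y : Fin N → ℝ}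
    (hy : y ∈ GammaM Ω Φ) :
    Tendsto (fun t => entryMod Ω Φ c f (Φ y t)) (𝓝[>] (0 : ℝ)) (𝓝 (c y)) := by
  refine tendsto_const_nhds.congr' ?_
  have h1 : ∀ᶠ t in 𝓝[>] (0:ℝ), ENNReal.ofReal t < tauP Ω Φ y :=
    (ENNReal.continuous_ofReal.continuousAt.eventually_lt_const (by
      simpa using tauP_pos_of_mem_GammaM fl hΩ hy)).filter_mono nhdsWithin_le_nhds
  filter_upwards [h1, self_mem_nhdsWithin] with t ht ht0
  have hy' := notMem_of_mem_GammaM fl hΩ hy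
  rw [entryMod, tauM_flow_enter fl hΩ hy' ht0 ht, yM_flow_enter fl hΩ hy' ht0 ht,
    if_pos ENNReal.ofReal_lt_top]

/-- The incoming trace of the solution. If `μ(Ω₋) = 0`, the measure `μ₋` is not determined by `μ`,
and the representative has to be chosen with the prescribed trace everywhere on `Γ₋`. -/
theorem isTraceM_of_ode (fl : IsFlow Φ) (hΩ : IsOpen Ω) {μ μm ν : Measure (Fin N → ℝ)}
    (hν : (ν = μm.restrict (GammaM Ω Φ) ∧ μ (OmM Ω Φ) ≠ 0) ∨ (ν = 0 ∧ μ (OmM Ω Φ) = 0))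
    {f f0 k u : (Fin N → ℝ) → ℝ} (hf : f0 =ᵐ[μ.restrict Ω] f)
    (hode : ∀ᵐ x ∂μ.restrict Ω, ∀ t₁ t₂ : ℝ, t₁ ≤ t₂ →
      ENNReal.ofReal (-t₁) < tauM Ω Φ x → ENNReal.ofReal t₂ < tauP Ω Φ x →
      f0 (Φ x t₁) - f0 (Φ x t₂) = ∫ s in t₁..t₂, k (Φ x s))
    (htr : ∀ᵐ y ∂ν, Tendsto (fun t => f0 (Φ y t)) (𝓝[>] (0 : ℝ)) (𝓝 (u y))) :
    IsTraceM Ω Φ μ μm f k u := by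
  rcases hν with ⟨rfl, -⟩ | ⟨-, h0⟩
  · exact ⟨f0, hf, hode, htr⟩
  · have htop := ae_tauM_top hΩ h0
    refine ⟨entryMod Ω Φ u f0, ?_, ?_, ?_⟩
    · filter_upwards [htop, hf] with x hx1 hx2
      rw [entryMod_of_top hx1, hx2]
    · filter_upwards [htop, hode, ae_restrict_mem hΩ.measurableSet]
        with x hx1 hx2 hxΩ t₁ t₂ h12 h1 h2
      rw [entryMod_of_top (tauM_top_flow fl hΩ hxΩ hx1 ((ENNReal.ofReal_le_ofReal h12).trans_lt h2)),
        entryMod_of_top (tauM_top_flow fl hΩ hxΩ hx1 h2)]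
      exact hx2 t₁ t₂ h12 h1 h2
    · filter_upwards [ae_restrict_mem (measurableSet_GammaM fl hΩ)] with y hy
      exact entryMod_tendsto fl hΩ u f0 hy

/-- The outgoing trace of the solution, with the same dichotomy for `Ω₊`; in the degenerate case the
outgoing trace is taken to be zero. -/
theorem exists_traceP (fl : IsFlow Φ) (hΩ : IsOpen Ω) {μ μp νp : Measure (Fin N → ℝ)}
    (hν : (νp = μp.restrict (GammaP Ω Φ) ∧ μ (OmM Ω (fun x s => Φ x (-s))) ≠ 0) ∨
      (νp = 0 ∧ μ (OmM Ω (fun x s => Φ x (-s))) = 0))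
    {f f0 k : (Fin N → ℝ) → ℝ} (hf : f0 =ᵐ[μ.restrict Ω] f)
    (hode : ∀ᵐ x ∂μ.restrict Ω, ∀ t₁ t₂ : ℝ, t₁ ≤ t₂ →
      ENNReal.ofReal (-t₁) < tauM Ω Φ x → ENNReal.ofReal t₂ < tauP Ω Φ x →
      f0 (Φ x t₁) - f0 (Φ x t₂) = ∫ s in t₁..t₂, k (Φ x s))
    (hi : Integrable f0 νp)
    (htr : ∀ᵐ y ∂νp, Tendsto (fun t => f0 (Φ y (-t))) (𝓝[>] (0 : ℝ)) (𝓝 (f0 y))) :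
    ∃ w, IsTraceP Ω Φ μ μp f k w ∧ Integrable w (μp.restrict (GammaP Ω Φ)) ∧
      ∫ y in GammaP Ω Φ, |w y| ∂μp = ∫ y, |f0 y| ∂νp := by
  rcases hν with ⟨rfl, -⟩ | ⟨rfl, h0⟩
  · exact ⟨f0, ⟨f0, hf, hode, htr⟩, hi, rfl⟩
  · have htop := ae_tauM_top hΩ h0
    refine ⟨fun _ => 0, ⟨entryMod Ω (fun x s => Φ x (-s)) (fun _ => 0) f0, ?_, ?_, ?_⟩,
      integrable_zero _ _ _, by simp⟩
    · filter_upwards [htop, hf] with x hx1 hx2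
      rw [entryMod_of_top hx1, hx2]
    · filter_upwards [htop, hode, ae_restrict_mem hΩ.measurableSet]
        with x hx1 hx2 hxΩ t₁ t₂ h12 h1 h2
      have hm : ∀ t : ℝ, ENNReal.ofReal (-t) < tauM Ω Φ x →
          tauM Ω (fun x s => Φ x (-s)) (Φ x t) = ⊤ := fun t ht => by
        have := tauM_top_flow fl.rev hΩ hxΩ hx1 (t := -t) ht
        rwa [neg_neg] at this
      rw [entryMod_of_top (hm t₁ h1),
        entryMod_of_top (hm t₂ ((ENNReal.ofReal_le_ofReal (by linarith)).trans_lt h1))]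
      exact hx2 t₁ t₂ h12 h1 h2
    · have hΓ := measurableSet_GammaM fl.rev hΩ
      rw [GammaM_rev] at hΓ
      filter_upwards [ae_restrict_mem hΓ] with y hy
      rw [← GammaM_rev] at hy
      exact entryMod_tendsto fl.rev hΩ (fun _ => 0) f0 hy

/-- Two solutions with the same source and the same incoming trace coincide. -/
theorem unique_of_trace (fl : IsFlow Φ) (hΩ : IsOpen Ω) {μ ν : Measure (Fin N → ℝ)} [SigmaFinite μ]
    (hmp : ∀ t, MeasurePreserving (fun x => Φ x t) μ μ) (hd : Disint Ω Φ μ ν)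
    {lam : ℝ} (hlam : 0 < lam) {f f0 f' fs g u : (Fin N → ℝ) → ℝ}
    (hf : Integrable f (μ.restrict Ω)) (hg : Integrable g (μ.restrict Ω))
    (hf' : Integrable f' (μ.restrict Ω))
    (hf0 : f0 =ᵐ[μ.restrict Ω] f) (hfs : fs =ᵐ[μ.restrict Ω] f')
    (hode0 : ∀ᵐ x ∂μ.restrict Ω, ∀ t₁ t₂ : ℝ, t₁ ≤ t₂ →
      ENNReal.ofReal (-t₁) < tauM Ω Φ x → ENNReal.ofReal t₂ < tauP Ω Φ x →
      f0 (Φ x t₁) - f0 (Φ x t₂) = ∫ s in t₁..t₂, (lam * f (Φ x s) - g (Φ x s)))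
    (hodes : ∀ᵐ x ∂μ.restrict Ω, ∀ t₁ t₂ : ℝ, t₁ ≤ t₂ →
      ENNReal.ofReal (-t₁) < tauM Ω Φ x → ENNReal.ofReal t₂ < tauP Ω Φ x →
      fs (Φ x t₁) - fs (Φ x t₂) = ∫ s in t₁..t₂, (lam * f' (Φ x s) - g (Φ x s)))
    (htr0 : ∀ᵐ y ∂ν, Tendsto (fun t => f0 (Φ y t)) (𝓝[>] (0 : ℝ)) (𝓝 (u y)))
    (htrs : ∀ᵐ y ∂ν, Tendsto (fun t => fs (Φ y t)) (𝓝[>] (0 : ℝ)) (𝓝 (u y))) :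
    f' =ᵐ[μ.restrict Ω] f := by
  set k := fun x => lam * f x - g x with hk
  set k' := fun x => lam * f' x - g x with hk'
  have hki : Integrable k (μ.restrict Ω) := (hf.const_mul lam).sub hg
  have hki' : Integrable k' (μ.restrict Ω) := (hf'.const_mul lam).sub hg
  set v := fun x => fs x - f0 x with hv
  have hvi : Integrable v (μ.restrict Ω) :=
    (hf'.congr hfs.symm).sub (hf.congr hf0.symm)
  have hgr := homog_growth fl hΩ hmp hlam (v := v) (h := fun x => k' x - k x) (hki'.sub hki) (by
      filter_upwards [hf0, hfs] with x h1 h2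
      simp only [hv, h1, h2, hk, hk']; ring) (by
      filter_upwards [hode0, hodes, ae_restrict_of_ae (ae_good fl hmp hΩ hlam hki),
        ae_restrict_of_ae (ae_good fl hmp hΩ hlam hki'), ae_restrict_mem hΩ.measurableSet]
        with x h1 h2 h3 h4 hxΩ t₁ t₂ h12 ht1 ht2
      have hm : ∀ s ∈ uIcc t₁ t₂, Φ x s ∈ Ω := fun s hs => by
        rw [uIcc_of_le h12] at hs
        exact mem_of_between fl hΩ hxΩ ht1 ht2 hs
      rw [intervalIntegral.integral_sub (h4.intervalIntegrable_flow hm)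
        (h3.intervalIntegrable_flow hm)]
      have e1 := h1 t₁ t₂ h12 ht1 ht2
      have e2 := h2 t₁ t₂ h12 ht1 ht2
      simp only [hv, hk, hk']
      linarith)
  have htr : ∀ᵐ x ∂μ.restrict Ω, tauM Ω Φ x < ⊤ →
      Tendsto (fun t => v (Φ (yM Ω Φ x) t)) (𝓝[>] (0 : ℝ)) (𝓝 0) := by
    refine hd.ae_yM fl hΩ (P := fun y => Tendsto (fun t => v (Φ y t)) (𝓝[>] (0 : ℝ)) (𝓝 0)) ?_
    filter_upwards [htr0, htrs] with y h1 h2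
    simpa using h2.sub h1
  filter_upwards [homog_zero fl hΩ hmp hlam hvi hgr htr, hf0, hfs] with x h1 h2 h3
  simp only [hv, h2, h3, Pi.zero_apply] at h1
  linarith

end

/-! ### The boundary value problem -/

theorem stmt_19
    {N : ℕ} (hN : 1 ≤ N) (κ : ℝ≥0) (hκ : 0 < κ)
    (F : (Fin N → ℝ) → (Fin N → ℝ)) (hF : LipschitzWith κ F)
    (Φ : (Fin N → ℝ) → ℝ → (Fin N → ℝ))
    (hΦ0 : ∀ x, Φ x 0 = x)
    (hΦ' : ∀ x s, HasDerivAt (Φ x) (F (Φ x s)) s)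
    (Ω : Set (Fin N → ℝ)) (hΩ : IsOpen Ω)
    (μ : Measure (Fin N → ℝ)) [IsFiniteMeasureOnCompacts μ]
    (hinv : ∀ (A : Set (Fin N → ℝ)) (t : ℝ), MeasurableSet A →
      μ ((fun x => Φ x t) '' A) = μ A)
    (μm μp : Measure (Fin N → ℝ))
    (hbm : IsBoundaryMeasures Ω Φ μ μm μp)
    (lam : ℝ) (hlam : 0 < lam)
    (u : (Fin N → ℝ) → ℝ) (hu : Integrable u (μm.restrict (GammaM Ω Φ)))
    (g : (Fin N → ℝ) → ℝ) (hg : Integrable g (μ.restrict Ω)) :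
    InDomTmax Ω Φ μ (bvpSol Ω Φ lam g u)
      (fun x => lam * bvpSol Ω Φ lam g u x - g x) ∧
    IsTraceM Ω Φ μ μm (bvpSol Ω Φ lam g u)
      (fun x => lam * bvpSol Ω Φ lam g u x - g x) u ∧
    (∀ f' : (Fin N → ℝ) → ℝ,
      InDomTmax Ω Φ μ f' (fun x => lam * f' x - g x) →
      IsTraceM Ω Φ μ μm f' (fun x => lam * f' x - g x) u →
      f' =ᵐ[μ.restrict Ω] bvpSol Ω Φ lam g u) ∧
    ∃ w : (Fin N → ℝ) → ℝ,
      IsTraceP Ω Φ μ μp (bvpSol Ω Φ lam g u)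
        (fun x => lam * bvpSol Ω Φ lam g u x - g x) w ∧
      Integrable w (μp.restrict (GammaP Ω Φ)) ∧
      (∫ y in GammaP Ω Φ, |w y| ∂μp) + lam * ∫ x in Ω, |bvpSol Ω Φ lam g u x| ∂μ
        ≤ (∫ y in GammaM Ω Φ, |u y| ∂μm) + ∫ x in Ω, |g x| ∂μ ∧
      ((∀ᵐ y ∂μm.restrict (GammaM Ω Φ), 0 ≤ u y) →
        (∀ᵐ x ∂μ.restrict Ω, 0 ≤ g x) →
        (∫ y in GammaP Ω Φ, |w y| ∂μp) + lam * ∫ x in Ω, |bvpSol Ω Φ lam g u x| ∂μ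
          = (∫ y in GammaM Ω Φ, |u y| ∂μm) + ∫ x in Ω, |g x| ∂μ) := by
  have fl : IsFlow Φ := isFlow_of_lipschitz hF hΦ0 hΦ'
  have : IsLocallyFiniteMeasure μ := isLocallyFiniteMeasure_of_isFiniteMeasureOnCompacts
  have : SigmaFinite μ := sigmaFinite_of_locallyFinite
  have hmp := mp_flow fl hinv
  have hbM : HalfBoundary Ω Φ μ μm := fun f hf => (hbm f hf).1
  have hbP : HalfBoundary Ω (fun x s => Φ x (-s)) μ μp := fun f hf => by
    have := (hbm f hf).2
    rw [OmM, GammaM_rev, tauM_rev, tauP_rev]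
    exact this
  obtain ⟨ν, hd, hν⟩ := exists_disint fl hΩ hbM
  obtain ⟨νp, hdp, hνp⟩ := exists_disint fl.rev hΩ hbP
  rw [GammaM_rev] at hνp
  obtain ⟨g0, hg0m, hgg0, hg0pos⟩ := exists_rep hg
  obtain ⟨u0, hu0m, huu0, hu0pos⟩ := exists_rep hu
  have hac : ∀ {P : (Fin N → ℝ) → Prop},
      (∀ᵐ y ∂μm.restrict (GammaM Ω Φ), P y) → ∀ᵐ y ∂ν, P y := by
    intro P hP
    rcases hν with ⟨rfl, -⟩ | ⟨rfl, -⟩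
    · exact hP
    · simp
  have huν : u =ᵐ[ν] u0 := hac huu0
  have hg0 : Integrable g0 (μ.restrict Ω) := hg.congr hgg0
  have hu0 : Integrable u0 ν := by
    rcases hν with ⟨rfl, -⟩ | ⟨rfl, -⟩
    · exact hu.congr huu0
    · exact integrable_zero_measure
  -- if `μ(Ω₋) = 0`, the boundary identities force `u` to vanish almost everywhere on `Γ₋`
  have hunorm : ∫ y in GammaM Ω Φ, |u y| ∂μm = ∫ y, |u0 y| ∂ν := by
    rcases hν with ⟨rfl, -⟩ | ⟨rfl, h0⟩
    · exact integral_congr_ae (huu0.fun_comp fun r => |r|)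
    · rw [integral_zero_measure]
      refine integral_eq_zero_of_ae ?_
      filter_upwards [ae_zero_of_degenerate fl hΩ hbM h0 hu] with y hy
      simp [hy]
  set f := bvpSol Ω Φ lam g u with hfdef
  set f0 := bvpSol Ω Φ lam g0 u0 with hf0def
  have hff0 : f =ᵐ[μ.restrict Ω] f0 := bvpSol_congr fl hΩ hmp hd lam hgg0 huν
  obtain ⟨hf0i, hf0p, hle, heq⟩ := bvpSol_norm fl hΩ hmp hd hdp hlam hg0m hu0m hg0 hu0
  have hfi : Integrable f (μ.restrict Ω) := hf0i.congr hff0.symm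
  have hk : (fun x => lam * f x - g x) =ᵐ[μ.restrict Ω] fun x => lam * f0 x - g0 x := by
    filter_upwards [hff0, hgg0] with x h1 h2
    rw [h1, h2]
  have hode : ∀ᵐ x ∂μ.restrict Ω, ∀ t₁ t₂ : ℝ, t₁ ≤ t₂ →
      ENNReal.ofReal (-t₁) < tauM Ω Φ x → ENNReal.ofReal t₂ < tauP Ω Φ x →
      f0 (Φ x t₁) - f0 (Φ x t₂) = ∫ s in t₁..t₂, (lam * f (Φ x s) - g (Φ x s)) := by
    filter_upwards [ae_restrict_of_ae (ae_good fl hmp hΩ hlam hg0),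
      ae_restrict_mem hΩ.measurableSet,
      integral_along_congr fl hΩ hmp hk] with x h1 hx h2 t₁ t₂ h12 ht1 ht2
    rw [h2 t₁ t₂ h12 ht1 ht2]
    exact bvpSol_ode fl hΩ hlam hg0m hx h1 h12 ht1 ht2
  have htrM : ∀ᵐ y ∂ν, Tendsto (fun t => f0 (Φ y t)) (𝓝[>] (0 : ℝ)) (𝓝 (u y)) := by
    filter_upwards [hd.supp, hd.ae_good fl hmp hΩ hlam hg0m hg0, huν] with y hy h1 h2
    rw [h2]
    exact bvpSol_traceM fl hΩ hlam hg0m hy h1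
  have htrP : ∀ᵐ z ∂νp, Tendsto (fun t => f0 (Φ z (-t))) (𝓝[>] (0 : ℝ)) (𝓝 (f0 z)) := by
    filter_upwards [hdp.supp, hdp.ae_good fl.rev (mp_rev hmp) hΩ hlam hg0m hg0] with z hz h1
    exact bvpSol_traceP fl hΩ (tauP_pos_of_mem_GammaM fl.rev hΩ hz) h1.of_rev
  have hfnorm : ∫ x in Ω, |f x| ∂μ = ∫ x in Ω, |f0 x| ∂μ :=
    integral_congr_ae (hff0.fun_comp fun r => |r|)
  have hgnorm : ∫ x in Ω, |g x| ∂μ = ∫ x in Ω, |g0 x| ∂μ :=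
    integral_congr_ae (hgg0.fun_comp fun r => |r|)
  refine ⟨⟨hfi, (hfi.const_mul lam).sub hg, fun ψ Dψ h => ?_⟩,
    isTraceM_of_ode fl hΩ hν hff0.symm hode htrM, ?_, ?_⟩
  · have h1 := bvpSol_weak fl hΩ hmp hd hlam hg0m hu0m hg0 hf0i h
    rw [integral_congr_ae (g := fun x => (lam * f0 x - g0 x) * ψ x), h1]
    · refine integral_congr_ae ?_
      filter_upwards [hff0] with x hx
      rw [hx]
    · filter_upwards [hff0, hgg0] with x hx1 hx2
      rw [hx1, hx2]
  · rintro f' ⟨hf'i, -, -⟩ ⟨fs, hfs, hodes, htrs⟩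
    exact unique_of_trace fl hΩ hmp hd hlam hfi hg hf'i hff0.symm hfs hode hodes htrM (hac htrs)
  · obtain ⟨w, hw, hwi, hwn⟩ := exists_traceP fl hΩ hνp
      (k := fun x => lam * f x - g x) hff0.symm hode hf0p htrP
    refine ⟨w, hw, hwi, ?_, fun hupos hgpos => ?_⟩
    · rw [hwn, hunorm, hfnorm, hgnorm]
      exact hle
    · rw [hwn, hunorm, hfnorm, hgnorm]
      exact heq (hg0pos hgpos) (hu0pos hupos)

end
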